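/- Let L > 0, T > 0 and fix feedback gains α, β with 0 < |α| < 1 and β > 0. There exists a constant C > 0 such that every classical solution u of the closed-loop linear KP-II system on [0,L]² × [0,T] satisfies the observability inequality ∫_Ω u(x,y,0)² dx dy ≤ C [ ∫₀^T ∫₀^L u_x(0,y,t)² dy dt + ∫₀^T ∫₀^L u(x,L,t)² dx dt + ∫₀^T ∫₀^L ((∂ₓ⁻¹ u_y)(0,y,t))² dy dt ]. -/

import Mathlib

open MeasureTheory Real

noncomputable section

/-- Partial derivative in `x` of `u(x,y,t)`. -/
def pdx (u : ℝ → ℝ → ℝ → ℝ) (x y t : ℝ) : ℝ := deriv (fun x' => u x' y t) x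

/-- Third partial derivative in `x` of `u(x,y,t)`. -/
def pdx3 (u : ℝ → ℝ → ℝ → ℝ) (x y t : ℝ) : ℝ := iteratedDeriv 3 (fun x' => u x' y t) x

/-- Partial derivative in `y` of `u(x,y,t)`. -/
def pdy (u : ℝ → ℝ → ℝ → ℝ) (x y t : ℝ) : ℝ := deriv (fun y' => u x y' t) y

/-- Second partial derivative in `y` of `u(x,y,t)`. -/
def pdy2 (u : ℝ → ℝ → ℝ → ℝ) (x y t : ℝ) : ℝ := iteratedDeriv 2 (fun y' => u x y' t) y

/-- Partial derivative in `t` of `u(x,y,t)`. -/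
def pdt (u : ℝ → ℝ → ℝ → ℝ) (x y t : ℝ) : ℝ := deriv (fun t' => u x y t') t

/-- The nonlocal operator `(∂ₓ⁻¹ w)(x,y) = -∫ₓ^L w(s,y) ds`. -/
def pxInv (L : ℝ) (w : ℝ → ℝ → ℝ) (x y : ℝ) : ℝ := -(∫ s in x..L, w s y)

/-- A classical solution of the closed-loop linear KP-II system on `[0,L]² × [0,T]`:
`u` is `C³`, satisfies `u_t + u_x + u_xxx + ∂ₓ⁻¹ u_yy = 0` on `Ω × (0,T)` and the
boundary feedback conditions for all `t ∈ [0,T]`. -/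
def IsKPSolution (L T α β : ℝ) (u : ℝ → ℝ → ℝ → ℝ) : Prop :=
  ContDiff ℝ 3 (fun p : ℝ × ℝ × ℝ => u p.1 p.2.1 p.2.2) ∧
  (∀ x ∈ Set.Ioo (0:ℝ) L, ∀ y ∈ Set.Ioo (0:ℝ) L, ∀ t ∈ Set.Ioo (0:ℝ) T,
      pdt u x y t + pdx u x y t + pdx3 u x y t
        + pxInv L (fun s y' => pdy2 u s y' t) x y = 0) ∧
  (∀ y ∈ Set.Icc (0:ℝ) L, ∀ t ∈ Set.Icc (0:ℝ) T,
      u 0 y t = 0 ∧ u L y t = 0 ∧ pdx u L y t = α * pdx u 0 y t) ∧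
  (∀ x ∈ Set.Icc (0:ℝ) L, ∀ t ∈ Set.Icc (0:ℝ) T,
      pdy u x L t = β * pdx u x L t ∧ pdy u x 0 t = 0)

/-- The energy `E(t) = ½ ∫_Ω u(x,y,t)² dx dy`. -/
def energy (L : ℝ) (u : ℝ → ℝ → ℝ → ℝ) (t : ℝ) : ℝ :=
  (1/2) * ∫ x in (0:ℝ)..L, ∫ y in (0:ℝ)..L, (u x y t)^2

/-!
The multipliers `1` and `x` bound `∫_Ω u(0)²` by the space-time integral of `u²` and the
observation, and give the smoothing estimate that controls the space-time integral of
`3 u_x² + (∂ₓ⁻¹ u_y)²` by the same two quantities. It remains to absorb the lower order term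
`∫∫ u²`.

Let `w = ∂ₓ⁻¹ u`. Interpolation between `w` and `w_xx = u_x` bounds `∫∫ u²` by a small multiple of
`∫∫ u_x²` and a large multiple of `∫∫ w²`. For fixed `x`, compactness in `y` bounds `∫∫ w²` by a
small multiple of `∫∫ w_y²` and finitely many cosine modes `∫ w cos(k y) dy`, whose frequencies
may be taken above any `k₀`: if `∫ f cos(k y) dy = 0` for all `k > k₀`, differentiating twice in
`k` repeatedly shows that all even moments of `f cos(k ·)` vanish, so `f cos(k ·) = 0` for every
such `k` by Weierstrass approximation, and `f = 0`.

The mode `u_k` of frequency `k` solves `∂ₜ u_k + u_k' + u_k''' - k² w_k = -γ_k` with `w_k' = u_k`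
and a boundary forcing `γ_k` bounded by the observation. The multiplier `x` now yields the
dissipation `3 ∫ u_k'² + k² ∫ w_k² ≥ 2 k ∫ u_k²`, which for large `k` beats all lower order terms,
so that every such mode is controlled by the observation.
-/

open Set Filter Topology

section Calculus

theorem integral_add_of_continuous {f g : ℝ → ℝ} (hf : Continuous f) (hg : Continuous g)
    (a b : ℝ) : ∫ x in a..b, (f x + g x) = (∫ x in a..b, f x) + ∫ x in a..b, g x :=
  intervalIntegral.integral_add (hf.intervalIntegrable a b) (hg.intervalIntegrable a b)

theorem integral_sub_of_continuous {f g : ℝ → ℝ} (hf : Continuous f) (hg : Continuous g)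
    (a b : ℝ) : ∫ x in a..b, (f x - g x) = (∫ x in a..b, f x) - ∫ x in a..b, g x :=
  intervalIntegral.integral_sub (hf.intervalIntegrable a b) (hg.intervalIntegrable a b)

theorem integral_le_integral_of_continuous {f g : ℝ → ℝ} (hf : Continuous f) (hg : Continuous g)
    {a b : ℝ} (hab : a ≤ b) (hfg : ∀ x ∈ Icc a b, f x ≤ g x) :
    ∫ x in a..b, f x ≤ ∫ x in a..b, g x :=
  intervalIntegral.integral_mono_on hab (hf.intervalIntegrable a b) (hg.intervalIntegrable a b) hfg

theorem integral_congr_Icc {f g : ℝ → ℝ} {a b : ℝ} (hab : a ≤ b) (hfg : ∀ x ∈ Icc a b, f x = g x) :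
    ∫ x in a..b, f x = ∫ x in a..b, g x :=
  intervalIntegral.integral_congr fun x hx => hfg x (by rwa [uIcc_of_le hab] at hx)

theorem integral_swap_of_continuous {f : ℝ → ℝ → ℝ} (hf : Continuous (Function.uncurry f))
    (a b c d : ℝ) :
    ∫ x in a..b, ∫ y in c..d, f x y = ∫ y in c..d, ∫ x in a..b, f x y :=
  intervalIntegral_intervalIntegral_swap <|
    (hf.continuousOn.integrableOn_compact (isCompact_uIcc.prod isCompact_uIcc)).mono_set
      (prod_mono uIoc_subset_uIcc uIoc_subset_uIcc)

theorem integral_eq_sub_of_hasDerivAt_of_continuous {f f' : ℝ → ℝ}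
    (hf : ∀ x, HasDerivAt f (f' x) x) (hf' : Continuous f') (a b : ℝ) :
    ∫ x in a..b, f' x = f b - f a :=
  intervalIntegral.integral_eq_sub_of_hasDerivAt (fun x _ => hf x) (hf'.intervalIntegrable a b)

theorem continuous_of_forall_hasDerivAt {f f' : ℝ → ℝ} (hf : ∀ x, HasDerivAt f (f' x) x) :
    Continuous f :=
  continuous_iff_continuousAt.2 fun x => (hf x).continuousAt

theorem hasDerivAt_neg_integral_left {f : ℝ → ℝ} (hf : Continuous f) (b x : ℝ) :
    HasDerivAt (fun x => -∫ s in x..b, f s) (f x) x := by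
  simpa using (intervalIntegral.integral_hasDerivAt_left (hf.intervalIntegrable x b)
    hf.stronglyMeasurable.stronglyMeasurableAtFilter hf.continuousAt).fun_neg

theorem hasDerivAt_integral_of_continuous {F F' : ℝ → ℝ → ℝ}
    (hF : Continuous (Function.uncurry F)) (hF' : Continuous (Function.uncurry F'))
    (hd : ∀ x y, HasDerivAt (fun x => F x y) (F' x y) x) (a b x : ℝ) :
    HasDerivAt (fun x => ∫ y in a..b, F x y) (∫ y in a..b, F' x y) x := by
  obtain ⟨C, hC⟩ := ((isCompact_closedBall x 1).prod
    (isCompact_uIcc (a := a) (b := b))).exists_bound_of_continuousOn hF'.continuousOn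
  have hFx (z : ℝ) : Continuous (F z) := by fun_prop
  have hFx' : Continuous (F' x) := by fun_prop
  exact (intervalIntegral.hasDerivAt_integral_of_dominated_loc_of_deriv_le (bound := fun _ => C)
    (Metric.closedBall_mem_nhds x one_pos) (.of_forall fun z => (hFx z).aestronglyMeasurable)
    ((hFx x).intervalIntegrable a b) hFx'.aestronglyMeasurable
    (.of_forall fun y hy z hz => hC (z, y) ⟨hz, uIoc_subset_uIcc hy⟩)
    (continuous_const.intervalIntegrable a b) (.of_forall fun y _ z _ => hd z y)).2

theorem sq_integral_le {f : ℝ → ℝ} (hf : Continuous f) {a b : ℝ} (hab : a ≤ b) :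
    (∫ x in a..b, f x) ^ 2 ≤ (b - a) * ∫ x in a..b, (f x) ^ 2 := by
  have discriminant : ∀ m : ℝ,
      0 ≤ (b - a) * (m * m) + -2 * (∫ x in a..b, f x) * m + ∫ x in a..b, (f x) ^ 2 := fun m =>
    calc
      0 ≤ ∫ x in a..b, (f x - m) ^ 2 := intervalIntegral.integral_nonneg hab fun x _ => sq_nonneg _
      _ = ∫ x in a..b, ((f x) ^ 2 + (-2 * m) * f x + m ^ 2) := by congr with x; ring
      _ = _ := by
        simp (disch := fun_prop) only [integral_add_of_continuous,
          intervalIntegral.integral_const_mul, intervalIntegral.integral_const, smul_eq_mul]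
        ring
  have := discrim_le_zero discriminant
  rw [discrim] at this
  linarith

theorem sq_sub_le_mul_integral_sq_deriv {f f' : ℝ → ℝ} (hf : ∀ x, HasDerivAt f (f' x) x)
    (hf' : Continuous f') {a b x y : ℝ} (hx : x ∈ Icc a b) (hy : y ∈ Icc a b) :
    (f x - f y) ^ 2 ≤ |x - y| * ∫ s in a..b, (f' s) ^ 2 := by
  wlog hyx : y ≤ x generalizing x y
  · rw [← neg_sub (f y), neg_sq, abs_sub_comm]
    exact this hy hx (le_of_not_ge hyx)
  rw [abs_of_nonneg (sub_nonneg.2 hyx), ← integral_eq_sub_of_hasDerivAt_of_continuous hf hf']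
  refine (sq_integral_le hf' hyx).trans
    (mul_le_mul_of_nonneg_left ?_ (sub_nonneg.2 hyx))
  exact intervalIntegral.integral_mono_interval hy.1 hyx hx.2 (.of_forall fun _ => sq_nonneg _)
    ((hf'.pow 2).intervalIntegrable a b)

theorem sq_le_mul_integral_sq_deriv {f f' : ℝ → ℝ} (hf : ∀ x, HasDerivAt f (f' x) x)
    (hf' : Continuous f') {a b x : ℝ} (hx : x ∈ Icc a b) (hfb : f b = 0) :
    (f x) ^ 2 ≤ (b - a) * ∫ s in a..b, (f' s) ^ 2 := by
  have hab : a ≤ b := hx.1.trans hx.2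
  have h := sq_sub_le_mul_integral_sq_deriv hf hf' hx (right_mem_Icc.2 hab)
  rw [hfb, sub_zero, abs_sub_comm, abs_of_nonneg (sub_nonneg.2 hx.2)] at h
  exact h.trans (mul_le_mul_of_nonneg_right (by linarith [hx.1])
    (intervalIntegral.integral_nonneg hab fun _ _ => sq_nonneg _))

theorem integral_sq_le_mul_integral_sq_deriv {f f' : ℝ → ℝ} (hf : ∀ x, HasDerivAt f (f' x) x)
    (hf' : Continuous f') {a b : ℝ} (hab : a ≤ b) (hfb : f b = 0) :
    ∫ x in a..b, (f x) ^ 2 ≤ (b - a) ^ 2 * ∫ x in a..b, (f' x) ^ 2 := by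
  have hfc : Continuous f := continuous_of_forall_hasDerivAt hf
  calc
    _ ≤ ∫ _x in a..b, (b - a) * ∫ s in a..b, (f' s) ^ 2 :=
      integral_le_integral_of_continuous (by fun_prop) (by fun_prop) hab fun x hx =>
        sq_le_mul_integral_sq_deriv hf hf' hx hfb
    _ = _ := by rw [intervalIntegral.integral_const, smul_eq_mul]; ring

end Calculus

section CosineUniqueness

theorem eq_zero_of_integral_even_pow_mul_eq_zero {g : ℝ → ℝ} (hg : Continuous g) {L : ℝ}
    (hL : 0 < L) (h : ∀ n : ℕ, ∫ s in (0 : ℝ)..L, s ^ (2 * n) * g s = 0) {s : ℝ}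
    (hs : s ∈ Icc 0 L) : g s = 0 := by
  have orthogonal (p : Polynomial ℝ) : ∫ s in (0 : ℝ)..L, p.eval (s ^ 2) * g s = 0 := by
    simp_rw [Polynomial.eval_eq_sum_range, Finset.sum_mul, mul_assoc, ← pow_mul]
    rw [intervalIntegral.integral_finsetSum fun i _ =>
      Continuous.intervalIntegrable (by fun_prop) 0 L]
    simp [h]
  have small (ε : ℝ) (hε : 0 < ε) :
      ∫ s in (0 : ℝ)..L, (g s) ^ 2 ≤ ε * ∫ s in (0 : ℝ)..L, |g s| := by
    obtain ⟨p, hp⟩ := exists_polynomial_near_of_continuousOn 0 (L ^ 2) (fun r => g √r)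
      (by fun_prop) ε hε
    calc
      ∫ s in (0 : ℝ)..L, (g s) ^ 2 = ∫ s in (0 : ℝ)..L, ((g s) ^ 2 - p.eval (s ^ 2) * g s) := by
        rw [integral_sub_of_continuous (by fun_prop) (by fun_prop), orthogonal, sub_zero]
      _ ≤ ∫ s in (0 : ℝ)..L, ε * |g s| := by
        refine integral_le_integral_of_continuous (by fun_prop) (by fun_prop) hL.le fun s hs => ?_
        have hps := hp (s ^ 2) ⟨sq_nonneg s, pow_le_pow_left₀ hs.1 hs.2 2⟩
        rw [sqrt_sq hs.1, abs_sub_comm] at hps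
        calc
          (g s) ^ 2 - p.eval (s ^ 2) * g s = (g s - p.eval (s ^ 2)) * g s := by ring
          _ ≤ |g s - p.eval (s ^ 2)| * |g s| := (le_abs_self _).trans (abs_mul _ _).le
          _ ≤ ε * |g s| := by gcongr
      _ = ε * ∫ s in (0 : ℝ)..L, |g s| := intervalIntegral.integral_const_mul _ _
  have integral_sq_le_zero : ∫ s in (0 : ℝ)..L, (g s) ^ 2 ≤ 0 := by
    refine ge_of_tendsto (x := 𝓝[>] 0) (f := fun ε => ε * ∫ s in (0 : ℝ)..L, |g s|) ?_
      (eventually_mem_nhdsWithin.mono small)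
    have : Tendsto id (𝓝[>] (0 : ℝ)) (𝓝 0) := tendsto_id.mono_left nhdsWithin_le_nhds
    simpa using this.mul_const (∫ s in (0 : ℝ)..L, |g s|)
  by_contra hgs
  refine integral_sq_le_zero.not_gt (intervalIntegral.integral_pos hL (by fun_prop)
    (fun x _ => sq_nonneg _) ⟨s, hs, by positivity⟩)

theorem integral_sq_mul_cos_eq_zero {g : ℝ → ℝ} (hg : Continuous g) {L k₀ : ℝ}
    (h : ∀ k > k₀, ∫ s in (0 : ℝ)..L, g s * cos (k * s) = 0) {k : ℝ} (hk : k₀ < k) :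
    ∫ s in (0 : ℝ)..L, (s ^ 2 * g s) * cos (k * s) = 0 := by
  have deriv_eq_zero {F : ℝ → ℝ} {F' : ℝ} {k : ℝ} (hk : k₀ < k) (hF : ∀ k > k₀, F k = 0)
      (hF' : HasDerivAt F F' k) : F' = 0 :=
    hF'.unique ((hasDerivAt_const k 0).congr_of_eventuallyEq
      ((eventually_gt_nhds hk).mono hF))
  have sine (k : ℝ) (hk : k₀ < k) : ∫ s in (0 : ℝ)..L, -(s * g s) * sin (k * s) = 0 :=
    deriv_eq_zero hk h <| hasDerivAt_integral_of_continuous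
      (F := fun k s => g s * cos (k * s)) (F' := fun k s => -(s * g s) * sin (k * s))
      (by fun_prop) (by fun_prop) (fun k s =>
        ((hasDerivAt_mul_const (x := k) s).cos.const_mul (g s)).congr_deriv (by ring)) 0 L k
  have cosine : ∫ s in (0 : ℝ)..L, -(s ^ 2 * g s) * cos (k * s) = 0 :=
    deriv_eq_zero hk sine <| hasDerivAt_integral_of_continuous
      (F := fun k s => -(s * g s) * sin (k * s)) (F' := fun k s => -(s ^ 2 * g s) * cos (k * s))
      (by fun_prop) (by fun_prop) (fun k s =>
        ((hasDerivAt_mul_const (x := k) s).sin.const_mul (-(s * g s))).congr_deriv (by ring)) 0 L k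
  simpa using cosine

theorem eq_zero_of_integral_mul_cos_eq_zero {f : ℝ → ℝ} (hf : Continuous f) {L k₀ : ℝ}
    (hL : 0 < L) (h : ∀ k > k₀, ∫ s in (0 : ℝ)..L, f s * cos (k * s) = 0) {s : ℝ}
    (hs : s ∈ Icc 0 L) : f s = 0 := by
  have moments (n : ℕ) : ∀ k > k₀, ∫ s in (0 : ℝ)..L, (s ^ (2 * n) * f s) * cos (k * s) = 0 := by
    induction n with
    | zero => simpa using h
    | succ n ih =>
      intro k hk
      convert integral_sq_mul_cos_eq_zero (by fun_prop) ih hk using 3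
      ring
  have mul_cos_eq_zero (k : ℝ) (hk : k₀ < k) : f s * cos (k * s) = 0 :=
    eq_zero_of_integral_even_pow_mul_eq_zero (g := fun s => f s * cos (k * s)) (by fun_prop) hL
      (fun n => by simpa only [mul_assoc] using moments n k hk) hs
  obtain ⟨k, hk, hks⟩ : ∃ k > k₀, cos (k * s) = 1 := by
    rcases hs.1.eq_or_lt with rfl | hs0
    · exact ⟨k₀ + 1, lt_add_one k₀, by simp⟩
    obtain ⟨n, hn⟩ := exists_nat_gt (k₀ * s / (2 * π))
    refine ⟨n * (2 * π) / s, (lt_div_iff₀ hs0).2 ((div_lt_iff₀ two_pi_pos).1 hn), ?_⟩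
    rw [div_mul_cancel₀ _ hs0.ne', cos_nat_mul_two_pi]
  simpa [hks] using mul_cos_eq_zero k hk

end CosineUniqueness

section Compactness

open scoped BoundedContinuousFunction

theorem exists_finset_pos_le_sum_sq_of_isCompact {X ι : Type*} [TopologicalSpace X] {s : Set X}
    (hs : IsCompact s) {I : Set ι} {φ : ι → X → ℝ} (hφ : ∀ i ∈ I, Continuous (φ i))
    (h : ∀ x ∈ s, ∃ i ∈ I, φ i x ≠ 0) :
    ∃ K : Finset ι, ↑K ⊆ I ∧ ∃ c > 0, ∀ x ∈ s, c ≤ ∑ i ∈ K, (φ i x) ^ 2 := by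
  obtain ⟨K, hKI, hK, hsK⟩ := hs.elim_finite_subcover_image (b := I) (c := fun i => {x | φ i x ≠ 0})
    (fun i hi => isOpen_ne_fun (hφ i hi) continuous_const) fun x hx => by simpa using h x hx
  lift K to Finset ι using hK
  refine ⟨K, hKI, hs.exists_forall_le' (f := fun x => ∑ i ∈ K, (φ i x) ^ 2)
    (continuous_finsetSum K fun i hi => (hφ i (hKI hi)).pow 2).continuousOn fun x hx => ?_⟩
  obtain ⟨i, hi, hix⟩ : ∃ i ∈ K, φ i x ≠ 0 := by simpa using hsK hx
  exact Finset.sum_pos' (fun _ _ => sq_nonneg _) ⟨i, hi, by positivity⟩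

/-- The functions on `[0, L]` with unit `L²` norm and Hölder-`1/2` seminorm at most `√M`, inside
the space of bounded continuous functions. Integrals are taken over `ℝ`, hence the extension. -/
def holderSphere {L : ℝ} (hL : 0 ≤ L) (M : ℝ) : Set (Icc 0 L →ᵇ ℝ) :=
  {f | ∫ x in (0 : ℝ)..L, (IccExtend hL f x) ^ 2 = 1 ∧ ∀ x y, (f x - f y) ^ 2 ≤ M * dist x y}

variable {L : ℝ}

theorem continuous_IccExtend_apply (hL : 0 ≤ L) :
    Continuous fun p : (Icc 0 L →ᵇ ℝ) × ℝ => IccExtend hL p.1 p.2 :=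
  continuous_fst.eval ((continuous_projIcc (h := hL)).comp continuous_snd)

theorem continuous_integral_IccExtend_mul (hL : 0 ≤ L) {g : ℝ → ℝ} (hg : Continuous g) :
    Continuous fun f : Icc 0 L →ᵇ ℝ => ∫ x in (0 : ℝ)..L, IccExtend hL f x * g x := by
  have := continuous_IccExtend_apply hL
  fun_prop

theorem isClosed_holderSphere (hL : 0 ≤ L) (M : ℝ) : IsClosed (holderSphere hL M) := by
  have := continuous_IccExtend_apply hL
  simp only [holderSphere, ofPred_and, ofPred_forall]
  exact (isClosed_eq (by fun_prop) continuous_const).inter <|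
    isClosed_iInter fun x => isClosed_iInter fun y =>
      isClosed_le (by fun_prop) continuous_const

theorem sq_le_of_mem_holderSphere (hL : 0 < L) {M : ℝ} (hM : 0 ≤ M) {f : Icc 0 L →ᵇ ℝ}
    (hf : f ∈ holderSphere hL.le M) (x : Icc 0 L) : (f x) ^ 2 ≤ 2 / L + 2 * M * L := by
  have pointwise : ∀ y ∈ Icc 0 L,
      (f x) ^ 2 ≤ 2 * (IccExtend hL.le f y) ^ 2 + 2 * M * L := fun y hy => by
    rw [IccExtend_of_mem hL.le f hy]
    have hxy := hf.2 x ⟨y, hy⟩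
    have : M * dist x ⟨y, hy⟩ ≤ M * L := mul_le_mul_of_nonneg_left
      (by simpa using! Real.dist_le_of_mem_Icc x.2 hy) hM
    nlinarith [sq_nonneg (f x - 2 * f ⟨y, hy⟩)]
  have : Continuous (IccExtend hL.le f) := f.continuous.Icc_extend'
  have averaged := integral_le_integral_of_continuous continuous_const (by fun_prop) hL.le pointwise
  simp (disch := fun_prop) only [integral_add_of_continuous, intervalIntegral.integral_const_mul,
    intervalIntegral.integral_const, hf.1, smul_eq_mul, sub_zero] at averaged
  rw [← mul_le_mul_iff_right₀ hL]
  exact averaged.trans_eq (by field_simp)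

theorem isCompact_holderSphere (hL : 0 < L) {M : ℝ} (hM : 0 ≤ M) :
    IsCompact (holderSphere hL.le M) := by
  refine BoundedContinuousFunction.arzela_ascoli₂ _ (isCompact_Icc (a := -√(2 / L + 2 * M * L))
    (b := √(2 / L + 2 * M * L))) _ (isClosed_holderSphere hL.le M)
    (fun f x hf => abs_le.1 (abs_le_sqrt (sq_le_of_mem_holderSphere hL hM hf x))) ?_
  refine Metric.equicontinuous_of_continuity_modulus (fun r => √(M * r)) ?_ _ fun x y f =>
    abs_le_sqrt (f.2.2 x y)
  simpa using (show Continuous fun r => √(M * r) by fun_prop).tendsto 0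

theorem exists_finset_pos_le_sum_sq_integral_cos (hL : 0 < L) {M : ℝ} (hM : 0 ≤ M) (k₀ : ℝ) :
    ∃ K : Finset ℝ, ↑K ⊆ Ioi k₀ ∧ ∃ c > 0, ∀ f ∈ holderSphere hL.le M,
      c ≤ ∑ k ∈ K, (∫ x in (0 : ℝ)..L, IccExtend hL.le f x * cos (k * x)) ^ 2 := by
  refine exists_finset_pos_le_sum_sq_of_isCompact (isCompact_holderSphere hL hM)
    (fun k _ => continuous_integral_IccExtend_mul hL.le (by fun_prop)) fun f hf => ?_
  by_contra! vanishing
  have : ∫ x in (0 : ℝ)..L, (IccExtend hL.le f x) ^ 2 = ∫ _x in (0 : ℝ)..L, (0 : ℝ) :=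
    integral_congr_Icc hL.le fun x hx => by
      rw [eq_zero_of_integral_mul_cos_eq_zero f.continuous.Icc_extend' hL vanishing hx, sq,
        mul_zero]
  simp [hf.1] at this

theorem exists_mem_holderSphere_eq_inv_sqrt_mul (hL : 0 < L) {M : ℝ} {f f' : ℝ → ℝ}
    (hf : ∀ x, HasDerivAt f (f' x) x) (hf' : Continuous f')
    (hpos : 0 < ∫ x in (0 : ℝ)..L, (f x) ^ 2)
    (hle : ∫ x in (0 : ℝ)..L, (f' x) ^ 2 ≤ M * ∫ x in (0 : ℝ)..L, (f x) ^ 2) :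
    ∃ g ∈ holderSphere hL.le M, ∀ x ∈ Icc 0 L,
      IccExtend hL.le g x = (√(∫ x in (0 : ℝ)..L, (f x) ^ 2))⁻¹ * f x := by
  have hfc : Continuous f := continuous_of_forall_hasDerivAt hf
  set m := ∫ x in (0 : ℝ)..L, (f x) ^ 2 with hm
  have hsq : (√m)⁻¹ ^ 2 = m⁻¹ := by rw [inv_pow, sq_sqrt hpos.le]
  let g : Icc 0 L →ᵇ ℝ := .mkOfCompact ⟨fun x => (√m)⁻¹ * f x, by fun_prop⟩
  have extend_g : ∀ x ∈ Icc 0 L, IccExtend hL.le g x = (√m)⁻¹ * f x := fun x hx =>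
    IccExtend_of_mem hL.le g hx
  refine ⟨g, ⟨?_, fun x y => ?_⟩, extend_g⟩
  · rw [integral_congr_Icc hL.le fun x hx => by rw [extend_g x hx, mul_pow, hsq],
      intervalIntegral.integral_const_mul, ← hm, inv_mul_cancel₀ hpos.ne']
  · calc
      (g x - g y) ^ 2 = m⁻¹ * (f x - f y) ^ 2 := by rw [← hsq, ← mul_pow, mul_sub]; rfl
      _ ≤ m⁻¹ * (dist x y * (M * m)) :=
        mul_le_mul_of_nonneg_left ((sq_sub_le_mul_integral_sq_deriv hf hf' x.2 y.2).trans
          (mul_le_mul_of_nonneg_left hle (abs_nonneg _))) (inv_nonneg.2 hpos.le)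
      _ = M * dist x y := by field_simp

theorem exists_finset_integral_sq_le_add_sum_sq_cos (hL : 0 < L) {ε : ℝ} (hε : 0 < ε) (k₀ : ℝ) :
    ∃ K : Finset ℝ, ↑K ⊆ Ioi k₀ ∧ ∃ C ≥ 0, ∀ f f' : ℝ → ℝ, (∀ x, HasDerivAt f (f' x) x) →
      Continuous f' → ∫ x in (0 : ℝ)..L, (f x) ^ 2 ≤
        ε * (∫ x in (0 : ℝ)..L, (f' x) ^ 2) +
          C * ∑ k ∈ K, (∫ x in (0 : ℝ)..L, f x * cos (k * x)) ^ 2 := by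
  obtain ⟨K, hK, c, hc, hcK⟩ :=
    exists_finset_pos_le_sum_sq_integral_cos hL (inv_nonneg.2 hε.le) k₀
  refine ⟨K, hK, c⁻¹, inv_nonneg.2 hc.le, fun f f' hf hf' => ?_⟩
  have hderiv : 0 ≤ ∫ x in (0 : ℝ)..L, (f' x) ^ 2 :=
    intervalIntegral.integral_nonneg hL.le fun _ _ => sq_nonneg _
  have hsum : 0 ≤ c⁻¹ * ∑ k ∈ K, (∫ x in (0 : ℝ)..L, f x * cos (k * x)) ^ 2 := by positivity
  by_cases! small : ∫ x in (0 : ℝ)..L, (f x) ^ 2 ≤ ε * ∫ x in (0 : ℝ)..L, (f' x) ^ 2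
  · linarith
  have hpos := (mul_nonneg hε.le hderiv).trans_lt small
  obtain ⟨g, g_mem, extend_g⟩ := exists_mem_holderSphere_eq_inv_sqrt_mul hL hf hf' hpos
    ((le_inv_mul_iff₀ hε).2 small.le)
  have lower := hcK g g_mem
  rw [Finset.sum_congr rfl fun k _ => by
    rw [integral_congr_Icc hL.le fun x hx => by rw [extend_g x hx, mul_assoc],
      intervalIntegral.integral_const_mul, mul_pow, inv_pow, sq_sqrt hpos.le],
    ← Finset.mul_sum, le_inv_mul_iff₀ hpos, mul_comm, ← le_inv_mul_iff₀ hc] at lower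
  linarith [mul_nonneg hε.le hderiv]

end Compactness

section Multipliers

theorem hasDerivAt_affine (a b x : ℝ) : HasDerivAt (fun x => a + b * x) b x := by
  simpa using ((hasDerivAt_id x).const_mul b).const_add a

theorem integral_affine_mul_self_mul_deriv_add_deriv3 {f f₁ f₂ f₃ : ℝ → ℝ}
    (hf : ∀ x, HasDerivAt f (f₁ x) x) (hf₁ : ∀ x, HasDerivAt f₁ (f₂ x) x)
    (hf₂ : ∀ x, HasDerivAt f₂ (f₃ x) x) (hf₃ : Continuous f₃) {L : ℝ} (hf0 : f 0 = 0)
    (hfL : f L = 0) (a b : ℝ) :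
    ∫ x in (0 : ℝ)..L, 2 * (a + b * x) * f x * (f₁ x + f₃ x) =
      b * (3 * (∫ x in (0 : ℝ)..L, (f₁ x) ^ 2) - ∫ x in (0 : ℝ)..L, (f x) ^ 2) +
        a * (f₁ 0) ^ 2 - (a + b * L) * (f₁ L) ^ 2 := by
  have : Continuous f := continuous_of_forall_hasDerivAt hf
  have : Continuous f₁ := continuous_of_forall_hasDerivAt hf₁
  have primitive : ∀ x, HasDerivAt
      (fun x => (a + b * x) * ((f x) ^ 2 + 2 * (f x * f₂ x) - (f₁ x) ^ 2) - 2 * b * (f x * f₁ x))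
      (2 * (a + b * x) * f x * (f₁ x + f₃ x) - b * (3 * (f₁ x) ^ 2 - (f x) ^ 2)) x := fun x => by
    have bracket := (((hf x).fun_pow 2).fun_add (((hf x).fun_mul (hf₂ x)).const_mul 2)).fun_sub
      ((hf₁ x).fun_pow 2)
    exact (((hasDerivAt_affine a b x).fun_mul bracket).fun_sub
      (((hf x).fun_mul (hf₁ x)).const_mul (2 * b))).congr_deriv (by ring)
  have integrated := integral_eq_sub_of_hasDerivAt_of_continuous primitive (by fun_prop) 0 L
  simp (disch := fun_prop) only [integral_sub_of_continuous,
    intervalIntegral.integral_const_mul, hf0, hfL] at integrated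
  linarith

theorem integral_affine_mul_deriv_mul_self {f f' : ℝ → ℝ} (hf : ∀ x, HasDerivAt f (f' x) x)
    (hf' : Continuous f') {L : ℝ} (hfL : f L = 0) (a b : ℝ) :
    ∫ x in (0 : ℝ)..L, 2 * (a + b * x) * f' x * f x =
      -(a * (f 0) ^ 2) - b * ∫ x in (0 : ℝ)..L, (f x) ^ 2 := by
  have : Continuous f := continuous_of_forall_hasDerivAt hf
  have primitive : ∀ x, HasDerivAt (fun x => (a + b * x) * (f x) ^ 2)
      (2 * (a + b * x) * f' x * f x + b * (f x) ^ 2) x := fun x =>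
    ((hasDerivAt_affine a b x).fun_mul ((hf x).fun_pow 2)).congr_deriv (by ring)
  have integrated := integral_eq_sub_of_hasDerivAt_of_continuous primitive (by fun_prop) 0 L
  simp (disch := fun_prop) only [integral_add_of_continuous,
    intervalIntegral.integral_const_mul, hfL] at integrated
  linarith

theorem two_mul_integral_sq_deriv_le {f f₁ f₂ : ℝ → ℝ} (hf : ∀ x, HasDerivAt f (f₁ x) x)
    (hf₁ : ∀ x, HasDerivAt f₁ (f₂ x) x) (hf₂ : Continuous f₂) {a b : ℝ} (hab : a ≤ b)
    (ha : f₁ a = 0) (hb : f₁ b = 0) (k : ℝ) :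
    2 * k * ∫ x in a..b, (f₁ x) ^ 2 ≤
      (∫ x in a..b, (f₂ x) ^ 2) + k ^ 2 * ∫ x in a..b, (f x) ^ 2 := by
  have : Continuous f := continuous_of_forall_hasDerivAt hf
  have : Continuous f₁ := continuous_of_forall_hasDerivAt hf₁
  have by_parts := integral_eq_sub_of_hasDerivAt_of_continuous
    (f := fun x => f x * f₁ x) (f' := fun x => (f₁ x) ^ 2 + f x * f₂ x)
    (fun x => ((hf x).fun_mul (hf₁ x)).congr_deriv (by ring)) (by fun_prop) a b
  have square : 0 ≤ ∫ x in a..b, (f₂ x + k * f x) ^ 2 :=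
    intervalIntegral.integral_nonneg hab fun _ _ => sq_nonneg _
  have expand : ∀ x, (f₂ x + k * f x) ^ 2 =
      (f₂ x) ^ 2 + 2 * k * (f x * f₂ x) + k ^ 2 * (f x) ^ 2 := fun x => by ring
  simp (disch := fun_prop) only [expand, integral_add_of_continuous,
    intervalIntegral.integral_const_mul, ha, hb] at by_parts square
  linear_combination square + 2 * k * by_parts

theorem abs_integral_two_mul_mul_mul_le {f g h : ℝ → ℝ} (hf : Continuous f) (hg : Continuous g)
    (hh : Continuous h) {a b m : ℝ} (hab : a ≤ b) (hm : ∀ x ∈ Icc a b, |h x| ≤ m) :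
    |∫ x in a..b, 2 * h x * f x * g x| ≤
      (∫ x in a..b, (f x) ^ 2) + m ^ 2 * ∫ x in a..b, (g x) ^ 2 := by
  refine (intervalIntegral.abs_integral_le_integral_abs hab).trans ?_
  rw [← intervalIntegral.integral_const_mul,
    ← integral_add_of_continuous (by fun_prop) (by fun_prop)]
  refine integral_le_integral_of_continuous (by fun_prop) (by fun_prop) hab fun x hx => ?_
  calc
    _ = 2 * |f x| * (|h x| * |g x|) := by
      simp only [abs_mul, abs_two]
      ring
    _ ≤ |f x| ^ 2 + (|h x| * |g x|) ^ 2 := two_mul_le_add_sq _ _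
    _ ≤ _ := by
      rw [mul_pow, sq_abs, sq_abs (g x)]
      gcongr
      exact hm x hx

end Multipliers

section TimeIntegration

theorem mul_initial_le_integral_add {N N' R : ℝ → ℝ} {T : ℝ} (hT : 0 ≤ T)
    (hN : ∀ t ∈ Icc 0 T, HasDerivAt N (N' t) t) (hR : Continuous R)
    (hR0 : ∀ t ∈ Icc 0 T, 0 ≤ R t) (hN' : ∀ t ∈ Icc 0 T, -N' t ≤ R t) :
    T * N 0 ≤ (∫ t in (0 : ℝ)..T, N t) + T * ∫ t in (0 : ℝ)..T, R t := by
  have hNc : ContinuousOn N (Icc 0 T) := fun t ht => (hN t ht).continuousAt.continuousWithinAt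
  have hderiv : ∀ t ∈ Icc 0 T, HasDerivAt (fun t => (t - T) * N t) (N t + (t - T) * N' t) t :=
    fun t ht => (((hasDerivAt_id t).sub_const T).fun_mul (hN t ht)).congr_deriv (by simp)
  have := intervalIntegral.sub_le_integral_of_hasDeriv_right_of_le
    (φ := fun t => N t + T * R t) hT
    (fun t ht => (hderiv t ht).continuousAt.continuousWithinAt)
    (fun t ht => (hderiv t (Ioo_subset_Icc_self ht)).hasDerivWithinAt)
    (hNc.add (by fun_prop)).integrableOn_Icc fun t ht => ?_
  · rw [intervalIntegral.integral_add (hNc.intervalIntegrable_of_Icc hT)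
      (Continuous.intervalIntegrable (by fun_prop) 0 T),
      intervalIntegral.integral_const_mul] at this
    linarith
  · have ht' := Ioo_subset_Icc_self ht
    nlinarith [hN' t ht', mul_nonneg ht'.1 (hR0 t ht'), ht'.2]

theorem integral_add_sub_le_of_add_deriv_le {Q Q' D S : ℝ → ℝ} {T : ℝ} (hT : 0 ≤ T)
    (hQ : ∀ t ∈ Icc 0 T, HasDerivAt Q (Q' t) t) (hD : Continuous D) (hS : Continuous S)
    (hDS : ∀ t ∈ Icc 0 T, D t + Q' t ≤ S t) :
    (∫ t in (0 : ℝ)..T, D t) + Q T - Q 0 ≤ ∫ t in (0 : ℝ)..T, S t := by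
  have := intervalIntegral.sub_le_integral_of_hasDeriv_right_of_le (φ := fun t => S t - D t) hT
    (fun t ht => (hQ t ht).continuousAt.continuousWithinAt)
    (fun t ht => (hQ t (Ioo_subset_Icc_self ht)).hasDerivWithinAt)
    (by fun_prop : Continuous fun t => S t - D t).continuousOn.integrableOn_Icc
    fun t ht => by linarith [hDS t (Ioo_subset_Icc_self ht)]
  rw [integral_sub_of_continuous hS hD] at this
  linarith

end TimeIntegration

section PartialDerivatives

variable {f : ℝ → ℝ → ℝ → ℝ} {n : ℕ}

theorem hasDerivAt_comp_curve (hf : ContDiff ℝ (n + 1) fun p : ℝ × ℝ × ℝ => f p.1 p.2.1 p.2.2)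
    {c : ℝ → ℝ × ℝ × ℝ} {e : ℝ × ℝ × ℝ} {s : ℝ} (hc : HasDerivAt c e s) :
    HasDerivAt (fun s => f (c s).1 (c s).2.1 (c s).2.2)
      (fderiv ℝ (fun p : ℝ × ℝ × ℝ => f p.1 p.2.1 p.2.2) (c s) e) s :=
  HasFDerivAt.comp_hasDerivAt (l := fun p : ℝ × ℝ × ℝ => f p.1 p.2.1 p.2.2) s
    (hf.differentiable (by norm_cast) (c s)).hasFDerivAt hc

theorem contDiff_fderiv_apply (hf : ContDiff ℝ (n + 1) fun p : ℝ × ℝ × ℝ => f p.1 p.2.1 p.2.2)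
    (e : ℝ × ℝ × ℝ) : ContDiff ℝ n fun p : ℝ × ℝ × ℝ =>
      fderiv ℝ (fun p : ℝ × ℝ × ℝ => f p.1 p.2.1 p.2.2) p e :=
  (hf.fderiv_right (m := n) (by norm_cast)).clm_apply contDiff_const

theorem hasDerivAt_pdx (hf : ContDiff ℝ (n + 1) fun p : ℝ × ℝ × ℝ => f p.1 p.2.1 p.2.2)
    (x y t : ℝ) : HasDerivAt (fun x => f x y t) (pdx f x y t) x :=
  (hasDerivAt_comp_curve hf ((hasDerivAt_id x).prodMk
    (hasDerivAt_const x (y, t)))).differentiableAt.hasDerivAt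

theorem hasDerivAt_pdy (hf : ContDiff ℝ (n + 1) fun p : ℝ × ℝ × ℝ => f p.1 p.2.1 p.2.2)
    (x y t : ℝ) : HasDerivAt (fun y => f x y t) (pdy f x y t) y :=
  (hasDerivAt_comp_curve hf ((hasDerivAt_const y x).prodMk
    ((hasDerivAt_id y).prodMk (hasDerivAt_const y t)))).differentiableAt.hasDerivAt

theorem hasDerivAt_pdt (hf : ContDiff ℝ (n + 1) fun p : ℝ × ℝ × ℝ => f p.1 p.2.1 p.2.2)
    (x y t : ℝ) : HasDerivAt (fun t => f x y t) (pdt f x y t) t :=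
  (hasDerivAt_comp_curve hf ((hasDerivAt_const t x).prodMk
    ((hasDerivAt_const t y).prodMk (hasDerivAt_id t)))).differentiableAt.hasDerivAt

theorem contDiff_pdx (hf : ContDiff ℝ (n + 1) fun p : ℝ × ℝ × ℝ => f p.1 p.2.1 p.2.2) :
    ContDiff ℝ n fun p : ℝ × ℝ × ℝ => pdx f p.1 p.2.1 p.2.2 := by
  convert contDiff_fderiv_apply hf (1, 0, 0) with p
  exact (hasDerivAt_comp_curve hf
    ((hasDerivAt_id p.1).prodMk (hasDerivAt_const p.1 p.2))).deriv

theorem contDiff_pdy (hf : ContDiff ℝ (n + 1) fun p : ℝ × ℝ × ℝ => f p.1 p.2.1 p.2.2) :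
    ContDiff ℝ n fun p : ℝ × ℝ × ℝ => pdy f p.1 p.2.1 p.2.2 := by
  convert contDiff_fderiv_apply hf (0, 1, 0) with p
  exact (hasDerivAt_comp_curve hf ((hasDerivAt_const p.2.1 p.1).prodMk
    ((hasDerivAt_id p.2.1).prodMk (hasDerivAt_const p.2.1 p.2.2)))).deriv

theorem contDiff_pdt (hf : ContDiff ℝ (n + 1) fun p : ℝ × ℝ × ℝ => f p.1 p.2.1 p.2.2) :
    ContDiff ℝ n fun p : ℝ × ℝ × ℝ => pdt f p.1 p.2.1 p.2.2 := by
  convert contDiff_fderiv_apply hf (0, 0, 1) with p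
  exact (hasDerivAt_comp_curve hf ((hasDerivAt_const p.2.2 p.1).prodMk
    ((hasDerivAt_const p.2.2 p.2.1).prodMk (hasDerivAt_id p.2.2)))).deriv

theorem pdx3_eq_pdx_pdx_pdx (f : ℝ → ℝ → ℝ → ℝ) : pdx3 f = pdx (pdx (pdx f)) := by
  funext x y t
  simp only [pdx3, pdx, iteratedDeriv_succ, iteratedDeriv_zero]

theorem pdy2_eq_pdy_pdy (f : ℝ → ℝ → ℝ → ℝ) : pdy2 f = pdy (pdy f) := by
  funext x y t
  simp only [pdy2, pdy, iteratedDeriv_succ, iteratedDeriv_zero]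

end PartialDerivatives

section InverseDerivative

/-- The operator `∂ₓ⁻¹` of `pxInv`, acting on functions of `(x, y, t)` with `t` as a parameter. -/
def invDx (L : ℝ) (f : ℝ → ℝ → ℝ → ℝ) (x y t : ℝ) : ℝ := -∫ s in x..L, f s y t

variable {L : ℝ} {f g : ℝ → ℝ → ℝ → ℝ}

theorem invDx_right (y t : ℝ) : invDx L f L y t = 0 := by
  simp [invDx]

theorem continuous_invDx (hf : Continuous fun p : ℝ × ℝ × ℝ => f p.1 p.2.1 p.2.2) :
    Continuous fun p : ℝ × ℝ × ℝ => invDx L f p.1 p.2.1 p.2.2 := by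
  simp only [invDx, intervalIntegral.integral_symm L, neg_neg]
  fun_prop

theorem hasDerivAt_invDx_fst (hf : Continuous fun p : ℝ × ℝ × ℝ => f p.1 p.2.1 p.2.2)
    (x y t : ℝ) : HasDerivAt (fun x => invDx L f x y t) (f x y t) x :=
  hasDerivAt_neg_integral_left (f := fun s => f s y t) (by fun_prop) L x

theorem hasDerivAt_invDx_snd (hf : Continuous fun p : ℝ × ℝ × ℝ => f p.1 p.2.1 p.2.2)
    (hg : Continuous fun p : ℝ × ℝ × ℝ => g p.1 p.2.1 p.2.2)
    (hd : ∀ x y t, HasDerivAt (fun y => f x y t) (g x y t) y) (x y t : ℝ) :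
    HasDerivAt (fun y => invDx L f x y t) (invDx L g x y t) y :=
  (hasDerivAt_integral_of_continuous (F := fun y s => f s y t) (F' := fun y s => g s y t)
    (by fun_prop) (by fun_prop) (fun y s => hd s y t) x L y).fun_neg

end InverseDerivative

namespace IsKPSolution

variable {L T α β : ℝ} {u : ℝ → ℝ → ℝ → ℝ}

section Regularity

theorem contDiff (hu : IsKPSolution L T α β u) :
    ContDiff ℝ ((2 : ℕ) + 1) fun p : ℝ × ℝ × ℝ => u p.1 p.2.1 p.2.2 :=
  hu.1.of_le (by norm_num)

theorem continuous (hu : IsKPSolution L T α β u) :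
    Continuous fun p : ℝ × ℝ × ℝ => u p.1 p.2.1 p.2.2 :=
  hu.1.continuous

theorem contDiff_pdx (hu : IsKPSolution L T α β u) :
    ContDiff ℝ ((1 : ℕ) + 1) fun p : ℝ × ℝ × ℝ => pdx u p.1 p.2.1 p.2.2 :=
  _root_.contDiff_pdx hu.contDiff

theorem contDiff_pdx_pdx (hu : IsKPSolution L T α β u) :
    ContDiff ℝ ((0 : ℕ) + 1) fun p : ℝ × ℝ × ℝ => pdx (pdx u) p.1 p.2.1 p.2.2 :=
  (_root_.contDiff_pdx hu.contDiff_pdx).of_le (by norm_num)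

theorem contDiff_pdy (hu : IsKPSolution L T α β u) :
    ContDiff ℝ ((1 : ℕ) + 1) fun p : ℝ × ℝ × ℝ => pdy u p.1 p.2.1 p.2.2 :=
  _root_.contDiff_pdy hu.contDiff

theorem continuous_pdx (hu : IsKPSolution L T α β u) :
    Continuous fun p : ℝ × ℝ × ℝ => pdx u p.1 p.2.1 p.2.2 :=
  hu.contDiff_pdx.continuous

theorem continuous_pdx_pdx_pdx (hu : IsKPSolution L T α β u) :
    Continuous fun p : ℝ × ℝ × ℝ => pdx (pdx (pdx u)) p.1 p.2.1 p.2.2 :=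
  (_root_.contDiff_pdx hu.contDiff_pdx_pdx).continuous

theorem continuous_pdy (hu : IsKPSolution L T α β u) :
    Continuous fun p : ℝ × ℝ × ℝ => pdy u p.1 p.2.1 p.2.2 :=
  hu.contDiff_pdy.continuous

theorem continuous_pdy_pdy (hu : IsKPSolution L T α β u) :
    Continuous fun p : ℝ × ℝ × ℝ => pdy (pdy u) p.1 p.2.1 p.2.2 :=
  (_root_.contDiff_pdy hu.contDiff_pdy).continuous

theorem continuous_pdt (hu : IsKPSolution L T α β u) :
    Continuous fun p : ℝ × ℝ × ℝ => pdt u p.1 p.2.1 p.2.2 :=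
  (_root_.contDiff_pdt hu.contDiff).continuous

theorem hasDerivAt_invDx_self_snd (hu : IsKPSolution L T α β u) (x y t : ℝ) :
    HasDerivAt (fun y => invDx L u x y t) (invDx L (pdy u) x y t) y :=
  hasDerivAt_invDx_snd hu.continuous hu.continuous_pdy (hasDerivAt_pdy hu.contDiff) x y t

theorem hasDerivAt_invDx_pdy_snd (hu : IsKPSolution L T α β u) (x y t : ℝ) :
    HasDerivAt (fun y => invDx L (pdy u) x y t) (invDx L (pdy (pdy u)) x y t) y :=
  hasDerivAt_invDx_snd hu.continuous_pdy hu.continuous_pdy_pdy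
    (hasDerivAt_pdy hu.contDiff_pdy) x y t

end Regularity

section Boundary

variable {x y t : ℝ}

theorem apply_zero (hu : IsKPSolution L T α β u) (hy : y ∈ Icc 0 L) (ht : t ∈ Icc 0 T) :
    u 0 y t = 0 :=
  (hu.2.2.1 y hy t ht).1

theorem apply_right (hu : IsKPSolution L T α β u) (hy : y ∈ Icc 0 L) (ht : t ∈ Icc 0 T) :
    u L y t = 0 :=
  (hu.2.2.1 y hy t ht).2.1

theorem pdx_right (hu : IsKPSolution L T α β u) (hy : y ∈ Icc 0 L) (ht : t ∈ Icc 0 T) :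
    pdx u L y t = α * pdx u 0 y t :=
  (hu.2.2.1 y hy t ht).2.2

theorem pdt_eq (hu : IsKPSolution L T α β u) (hL : 0 < L) (hT : 0 < T) (hx : x ∈ Icc 0 L)
    (hy : y ∈ Icc 0 L) (ht : t ∈ Icc 0 T) :
    pdt u x y t = -(pdx u x y t + pdx (pdx (pdx u)) x y t + invDx L (pdy (pdy u)) x y t) := by
  have := hu.continuous_pdx
  have := hu.continuous_pdx_pdx_pdx
  have := hu.continuous_pdt
  have := continuous_invDx (L := L) hu.continuous_pdy_pdy
  have interior : Ioo 0 L ×ˢ Ioo 0 L ×ˢ Ioo 0 T ⊆ {p : ℝ × ℝ × ℝ | pdt u p.1 p.2.1 p.2.2 =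
      -(pdx u p.1 p.2.1 p.2.2 + pdx (pdx (pdx u)) p.1 p.2.1 p.2.2 +
        invDx L (pdy (pdy u)) p.1 p.2.1 p.2.2)} := fun p hp => by
    have pde := hu.2.1 p.1 hp.1 p.2.1 hp.2.1 p.2.2 hp.2.2
    rw [pdx3_eq_pdx_pdx_pdx, pdy2_eq_pdy_pdy] at pde
    exact eq_neg_of_add_eq_zero_left (by rw [← pde, ← add_assoc, ← add_assoc]; rfl)
  have closed_box := closure_minimal interior (isClosed_eq (by fun_prop) (by fun_prop))
  rw [closure_prod_eq, closure_prod_eq, closure_Ioo hL.ne, closure_Ioo hT.ne] at closed_box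
  exact @closed_box (x, y, t) ⟨hx, hy, ht⟩

theorem invDx_pdy_top (hu : IsKPSolution L T α β u) (hx : x ∈ Icc 0 L) (ht : t ∈ Icc 0 T) :
    invDx L (pdy u) x L t = β * u x L t := by
  have hc := hu.continuous_pdx
  have feedback : ∫ s in x..L, pdy u s L t = ∫ s in x..L, β * pdx u s L t :=
    integral_congr_Icc hx.2 fun s hs => (hu.2.2.2 s ⟨hx.1.trans hs.1, hs.2⟩ t ht).1
  rw [invDx, feedback, intervalIntegral.integral_const_mul,
    integral_eq_sub_of_hasDerivAt_of_continuous (fun s => hasDerivAt_pdx hu.contDiff s L t)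
      (by fun_prop), hu.apply_right ⟨hx.1.trans hx.2, le_rfl⟩ ht]
  ring

theorem invDx_pdy_bottom (hu : IsKPSolution L T α β u) (hx : x ∈ Icc 0 L) (ht : t ∈ Icc 0 T) :
    invDx L (pdy u) x 0 t = 0 := by
  rw [invDx, integral_congr_Icc hx.2 fun s hs => (hu.2.2.2 s ⟨hx.1.trans hs.1, hs.2⟩ t ht).2]
  simp

end Boundary

end IsKPSolution

section SquareNorms

/-- The squared `L²(Ω)` norm of `f(·, ·, t)`. -/
def sqNorm (L : ℝ) (f : ℝ → ℝ → ℝ → ℝ) (t : ℝ) : ℝ :=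
  ∫ x in (0 : ℝ)..L, ∫ y in (0 : ℝ)..L, (f x y t) ^ 2

/-- The squared `L²` norm of the trace of `f(·, ·, t)` on the side `x = 0`. -/
def sqNormLeft (L : ℝ) (f : ℝ → ℝ → ℝ → ℝ) (t : ℝ) : ℝ :=
  ∫ y in (0 : ℝ)..L, (f 0 y t) ^ 2

/-- The squared `L²` norm of the trace of `f(·, ·, t)` on the side `y = L`. -/
def sqNormTop (L : ℝ) (f : ℝ → ℝ → ℝ → ℝ) (t : ℝ) : ℝ :=
  ∫ x in (0 : ℝ)..L, (f x L t) ^ 2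

/-- The boundary quantity observed at time `t`: the traces of `u_x` and `∂ₓ⁻¹ u_y` on `x = 0` and
of `u` on `y = L`. -/
def observation (L : ℝ) (u : ℝ → ℝ → ℝ → ℝ) (t : ℝ) : ℝ :=
  sqNormLeft L (pdx u) t + sqNormTop L u t + sqNormLeft L (invDx L (pdy u)) t

/-- The energy `∫_Ω (a + b x) u(x, y, t)² dx dy` for an affine multiplier `a + b x`. -/
def weightedEnergy (L : ℝ) (u : ℝ → ℝ → ℝ → ℝ) (a b t : ℝ) : ℝ :=
  ∫ x in (0 : ℝ)..L, ∫ y in (0 : ℝ)..L, (a + b * x) * (u x y t) ^ 2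

variable {L : ℝ} {f : ℝ → ℝ → ℝ → ℝ}

theorem sqNorm_nonneg (hL : 0 ≤ L) (f : ℝ → ℝ → ℝ → ℝ) (t : ℝ) : 0 ≤ sqNorm L f t :=
  intervalIntegral.integral_nonneg hL fun _ _ =>
    intervalIntegral.integral_nonneg hL fun _ _ => sq_nonneg _

theorem sqNormLeft_nonneg (hL : 0 ≤ L) (f : ℝ → ℝ → ℝ → ℝ) (t : ℝ) : 0 ≤ sqNormLeft L f t :=
  intervalIntegral.integral_nonneg hL fun _ _ => sq_nonneg _

theorem sqNormTop_nonneg (hL : 0 ≤ L) (f : ℝ → ℝ → ℝ → ℝ) (t : ℝ) : 0 ≤ sqNormTop L f t :=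
  intervalIntegral.integral_nonneg hL fun _ _ => sq_nonneg _

theorem observation_nonneg (hL : 0 ≤ L) (u : ℝ → ℝ → ℝ → ℝ) (t : ℝ) : 0 ≤ observation L u t :=
  add_nonneg (add_nonneg (sqNormLeft_nonneg hL _ t) (sqNormTop_nonneg hL _ t))
    (sqNormLeft_nonneg hL _ t)

theorem continuous_sqNorm (hf : Continuous fun p : ℝ × ℝ × ℝ => f p.1 p.2.1 p.2.2) :
    Continuous (sqNorm L f) := by
  unfold sqNorm
  fun_prop

theorem continuous_sqNormLeft (hf : Continuous fun p : ℝ × ℝ × ℝ => f p.1 p.2.1 p.2.2) :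
    Continuous (sqNormLeft L f) := by
  unfold sqNormLeft
  fun_prop

theorem continuous_sqNormTop (hf : Continuous fun p : ℝ × ℝ × ℝ => f p.1 p.2.1 p.2.2) :
    Continuous (sqNormTop L f) := by
  unfold sqNormTop
  fun_prop

theorem sqNorm_eq_integral_swap (hf : Continuous fun p : ℝ × ℝ × ℝ => f p.1 p.2.1 p.2.2) (t : ℝ) :
    sqNorm L f t = ∫ y in (0 : ℝ)..L, ∫ x in (0 : ℝ)..L, (f x y t) ^ 2 :=
  integral_swap_of_continuous (f := fun x y => (f x y t) ^ 2) (by fun_prop) 0 L 0 L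

theorem weightedEnergy_one_zero (u : ℝ → ℝ → ℝ → ℝ) (t : ℝ) :
    weightedEnergy L u 1 0 t = sqNorm L u t := by
  simp [weightedEnergy, sqNorm]

theorem weightedEnergy_zero_one_nonneg (hL : 0 ≤ L) (u : ℝ → ℝ → ℝ → ℝ) (t : ℝ) :
    0 ≤ weightedEnergy L u 0 1 t :=
  intervalIntegral.integral_nonneg hL fun x hx =>
    intervalIntegral.integral_nonneg hL fun _ _ => by
      have := hx.1
      positivity

theorem weightedEnergy_zero_one_le (hL : 0 ≤ L) {u : ℝ → ℝ → ℝ → ℝ}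
    (hu : Continuous fun p : ℝ × ℝ × ℝ => u p.1 p.2.1 p.2.2) (t : ℝ) :
    weightedEnergy L u 0 1 t ≤ L * sqNorm L u t := by
  simp only [weightedEnergy, sqNorm, ← intervalIntegral.integral_const_mul]
  refine integral_le_integral_of_continuous (by fun_prop) (by fun_prop) hL fun x hx =>
    integral_le_integral_of_continuous (by fun_prop) (by fun_prop) hL fun y _ =>
      mul_le_mul_of_nonneg_right (by linarith [hx.2]) (sq_nonneg _)

end SquareNorms

namespace IsKPSolution

variable {L T α β : ℝ} {u : ℝ → ℝ → ℝ → ℝ} {t : ℝ}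

theorem continuous_observation (hu : IsKPSolution L T α β u) : Continuous (observation L u) :=
  ((continuous_sqNormLeft hu.continuous_pdx).add (continuous_sqNormTop hu.continuous)).add
    (continuous_sqNormLeft (continuous_invDx hu.continuous_pdy))

section EnergyIdentity

theorem integral_affine_mul_self_mul_pdx_add_pdx3 (hu : IsKPSolution L T α β u) (hL : 0 ≤ L)
    (ht : t ∈ Icc 0 T) (a b : ℝ) :
    ∫ x in (0 : ℝ)..L, ∫ y in (0 : ℝ)..L,
        2 * (a + b * x) * u x y t * (pdx u x y t + pdx (pdx (pdx u)) x y t) =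
      b * (3 * sqNorm L (pdx u) t - sqNorm L u t) +
        (a - (a + b * L) * α ^ 2) * sqNormLeft L (pdx u) t := by
  have := hu.continuous
  have := hu.continuous_pdx
  have := hu.continuous_pdx_pdx_pdx
  have slice : ∀ y ∈ Icc 0 L, ∫ x in (0 : ℝ)..L,
      2 * (a + b * x) * u x y t * (pdx u x y t + pdx (pdx (pdx u)) x y t) =
      b * (3 * (∫ x in (0 : ℝ)..L, (pdx u x y t) ^ 2) - ∫ x in (0 : ℝ)..L, (u x y t) ^ 2) +
        (a - (a + b * L) * α ^ 2) * (pdx u 0 y t) ^ 2 := fun y hy => by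
    rw [integral_affine_mul_self_mul_deriv_add_deriv3 (fun x => hasDerivAt_pdx hu.contDiff x y t)
      (fun x => hasDerivAt_pdx hu.contDiff_pdx x y t)
      (fun x => hasDerivAt_pdx hu.contDiff_pdx_pdx x y t) (by fun_prop) (hu.apply_zero hy ht)
      (hu.apply_right hy ht), hu.pdx_right hy ht]
    ring
  rw [integral_swap_of_continuous (by fun_prop), integral_congr_Icc hL slice,
    sqNorm_eq_integral_swap hu.continuous, sqNorm_eq_integral_swap hu.continuous_pdx, sqNormLeft]
  rw [integral_add_of_continuous (by fun_prop) (by fun_prop), intervalIntegral.integral_const_mul,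
    integral_sub_of_continuous (by fun_prop) (by fun_prop), intervalIntegral.integral_const_mul,
    intervalIntegral.integral_const_mul]

theorem integral_self_mul_invDx_pdy_pdy (hu : IsKPSolution L T α β u) {x : ℝ} (hx : x ∈ Icc 0 L)
    (ht : t ∈ Icc 0 T) :
    ∫ y in (0 : ℝ)..L, u x y t * invDx L (pdy (pdy u)) x y t =
      β * (u x L t) ^ 2 - ∫ y in (0 : ℝ)..L, pdy u x y t * invDx L (pdy u) x y t := by
  have := hu.continuous
  have := hu.continuous_pdy
  have := continuous_invDx (L := L) hu.continuous_pdy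
  have := continuous_invDx (L := L) hu.continuous_pdy_pdy
  have by_parts := integral_eq_sub_of_hasDerivAt_of_continuous
    (fun y => (hasDerivAt_pdy hu.contDiff x y t).fun_mul (hu.hasDerivAt_invDx_pdy_snd x y t))
    (by fun_prop) 0 L
  rw [integral_add_of_continuous (by fun_prop) (by fun_prop), hu.invDx_pdy_top hx ht,
    hu.invDx_pdy_bottom hx ht] at by_parts
  linarith

theorem integral_affine_mul_pdy_mul_invDx_pdy (hu : IsKPSolution L T α β u) (a b : ℝ) :
    ∫ x in (0 : ℝ)..L, ∫ y in (0 : ℝ)..L,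
        2 * (a + b * x) * pdy u x y t * invDx L (pdy u) x y t =
      -(a * sqNormLeft L (invDx L (pdy u)) t) - b * sqNorm L (invDx L (pdy u)) t := by
  have := hu.continuous_pdy
  have := continuous_invDx (L := L) hu.continuous_pdy
  rw [integral_swap_of_continuous (by fun_prop), sqNorm_eq_integral_swap this, sqNormLeft]
  simp_rw [integral_affine_mul_deriv_mul_self (f := fun x => invDx L (pdy u) x _ t)
    (fun x => hasDerivAt_invDx_fst hu.continuous_pdy x _ t)
    (by fun_prop) (invDx_right _ t)]
  rw [integral_sub_of_continuous (by fun_prop) (by fun_prop), intervalIntegral.integral_neg,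
    intervalIntegral.integral_const_mul, intervalIntegral.integral_const_mul]

theorem integral_affine_mul_self_mul_invDx_pdy_pdy (hu : IsKPSolution L T α β u) (hL : 0 ≤ L)
    (ht : t ∈ Icc 0 T) (a b : ℝ) :
    ∫ x in (0 : ℝ)..L, ∫ y in (0 : ℝ)..L,
        2 * (a + b * x) * u x y t * invDx L (pdy (pdy u)) x y t =
      2 * β * (∫ x in (0 : ℝ)..L, (a + b * x) * (u x L t) ^ 2) +
        a * sqNormLeft L (invDx L (pdy u)) t + b * sqNorm L (invDx L (pdy u)) t := by
  have := hu.continuous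
  have := hu.continuous_pdy
  have := continuous_invDx (L := L) hu.continuous_pdy
  calc
    _ = ∫ x in (0 : ℝ)..L, (2 * β * ((a + b * x) * (u x L t) ^ 2) -
        ∫ y in (0 : ℝ)..L, 2 * (a + b * x) * pdy u x y t * invDx L (pdy u) x y t) :=
      integral_congr_Icc hL fun x hx => by
        simp_rw [mul_assoc (2 * (a + b * x)), intervalIntegral.integral_const_mul,
          hu.integral_self_mul_invDx_pdy_pdy hx ht]
        ring
    _ = _ := by
      rw [integral_sub_of_continuous (by fun_prop) (by fun_prop),
        hu.integral_affine_mul_pdy_mul_invDx_pdy, intervalIntegral.integral_const_mul]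
      ring

theorem hasDerivAt_weightedEnergy_pdt (hu : IsKPSolution L T α β u) (a b t : ℝ) :
    HasDerivAt (weightedEnergy L u a b)
      (∫ x in (0 : ℝ)..L, ∫ y in (0 : ℝ)..L, 2 * (a + b * x) * u x y t * pdt u x y t) t := by
  have := hu.continuous
  have := hu.continuous_pdt
  refine hasDerivAt_integral_of_continuous
    (F := fun t x => ∫ y in (0 : ℝ)..L, (a + b * x) * (u x y t) ^ 2)
    (F' := fun t x => ∫ y in (0 : ℝ)..L, 2 * (a + b * x) * u x y t * pdt u x y t)
    (by fun_prop) (by fun_prop) (fun t x => ?_) 0 L t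
  exact hasDerivAt_integral_of_continuous (F := fun t y => (a + b * x) * (u x y t) ^ 2)
    (F' := fun t y => 2 * (a + b * x) * u x y t * pdt u x y t) (by fun_prop) (by fun_prop)
    (fun t y => (((hasDerivAt_pdt hu.contDiff x y t).fun_pow 2).const_mul _).congr_deriv
      (by push_cast; ring)) 0 L t

theorem hasDerivAt_weightedEnergy (hu : IsKPSolution L T α β u) (hL : 0 < L) (hT : 0 < T)
    (ht : t ∈ Icc 0 T) (a b : ℝ) :
    HasDerivAt (weightedEnergy L u a b)
      (-(b * (3 * sqNorm L (pdx u) t - sqNorm L u t + sqNorm L (invDx L (pdy u)) t) +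
        (a - (a + b * L) * α ^ 2) * sqNormLeft L (pdx u) t +
        2 * β * (∫ x in (0 : ℝ)..L, (a + b * x) * (u x L t) ^ 2) +
        a * sqNormLeft L (invDx L (pdy u)) t)) t := by
  have := hu.continuous
  have := hu.continuous_pdx
  have := hu.continuous_pdx_pdx_pdx
  have := continuous_invDx (L := L) hu.continuous_pdy_pdy
  refine (hu.hasDerivAt_weightedEnergy_pdt a b t).congr_deriv ?_
  calc
    _ = ∫ x in (0 : ℝ)..L, -((∫ y in (0 : ℝ)..L,
          2 * (a + b * x) * u x y t * (pdx u x y t + pdx (pdx (pdx u)) x y t)) +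
        ∫ y in (0 : ℝ)..L, 2 * (a + b * x) * u x y t * invDx L (pdy (pdy u)) x y t) :=
      integral_congr_Icc hL.le fun x hx => by
        rw [← integral_add_of_continuous (by fun_prop) (by fun_prop),
          ← intervalIntegral.integral_neg]
        refine integral_congr_Icc hL.le fun y hy => ?_
        rw [hu.pdt_eq hL hT hx hy ht]
        ring
    _ = _ := by
      rw [intervalIntegral.integral_neg, integral_add_of_continuous (by fun_prop) (by fun_prop),
        hu.integral_affine_mul_self_mul_pdx_add_pdx3 hL.le ht,
        hu.integral_affine_mul_self_mul_invDx_pdy_pdy hL.le ht]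
      ring

end EnergyIdentity

section EnergyInequalities

theorem mul_sqNorm_initial_le (hu : IsKPSolution L T α β u) (hL : 0 < L) (hT : 0 < T) :
    T * sqNorm L u 0 ≤ (∫ t in (0 : ℝ)..T, sqNorm L u t) +
      T * ((1 + 2 * |β|) * ∫ t in (0 : ℝ)..T, observation L u t) := by
  have := hu.continuous_observation
  rw [← intervalIntegral.integral_const_mul]
  simp only [← weightedEnergy_one_zero]
  refine mul_initial_le_integral_add hT.le
    (fun t ht => hu.hasDerivAt_weightedEnergy hL hT ht 1 0) (by fun_prop)
    (fun t _ => mul_nonneg (by positivity) (observation_nonneg hL.le u t)) fun t _ => ?_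
  have trace : ∫ x in (0 : ℝ)..L, (1 + 0 * x) * (u x L t) ^ 2 = sqNormTop L u t := by
    simp [sqNormTop]
  have hP := sqNormLeft_nonneg hL.le (pdx u) t
  have hB := sqNormTop_nonneg hL.le u t
  have hV := sqNormLeft_nonneg hL.le (invDx L (pdy u)) t
  rw [trace, observation]
  nlinarith [mul_nonneg (sq_nonneg α) hP, mul_nonneg (abs_nonneg β) hP,
    mul_le_mul_of_nonneg_right (le_abs_self β) hB, mul_nonneg (abs_nonneg β) hV]

theorem weighted_boundary_flux_le (hu : IsKPSolution L T α β u) (hL : 0 ≤ L) (t : ℝ) :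
    -(2 * β * ∫ x in (0 : ℝ)..L, (0 + 1 * x) * (u x L t) ^ 2) + L * α ^ 2 * sqNormLeft L (pdx u) t ≤
      L * (α ^ 2 + 2 * |β|) * observation L u t := by
  have := hu.continuous
  have hP := sqNormLeft_nonneg hL (pdx u) t
  have hB := sqNormTop_nonneg hL u t
  have hV := sqNormLeft_nonneg hL (invDx L (pdy u)) t
  have weighted_nonneg : 0 ≤ ∫ x in (0 : ℝ)..L, (0 + 1 * x) * (u x L t) ^ 2 :=
    intervalIntegral.integral_nonneg hL fun x hx =>
      mul_nonneg (by linarith [hx.1]) (sq_nonneg _)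
  have weighted_le : ∫ x in (0 : ℝ)..L, (0 + 1 * x) * (u x L t) ^ 2 ≤ L * sqNormTop L u t := by
    rw [sqNormTop, ← intervalIntegral.integral_const_mul]
    exact integral_le_integral_of_continuous (by fun_prop) (by fun_prop) hL fun x hx =>
      mul_le_mul_of_nonneg_right (by linarith [hx.2]) (sq_nonneg _)
  calc
    _ ≤ 2 * |β| * (L * sqNormTop L u t) + L * α ^ 2 * sqNormLeft L (pdx u) t := by
      nlinarith [neg_abs_le β, abs_nonneg β,
        mul_le_mul_of_nonneg_right (neg_abs_le β) weighted_nonneg]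
    _ ≤ _ := by
      have : 0 ≤ L * α ^ 2 * (sqNormTop L u t + sqNormLeft L (invDx L (pdy u)) t) := by positivity
      have : 0 ≤ L * |β| * (sqNormLeft L (pdx u) t + sqNormLeft L (invDx L (pdy u)) t) := by
        positivity
      rw [observation]
      linarith

theorem integral_dissipation_le (hu : IsKPSolution L T α β u) (hL : 0 < L) (hT : 0 < T) :
    ∫ t in (0 : ℝ)..T, (3 * sqNorm L (pdx u) t + sqNorm L (invDx L (pdy u)) t) ≤
      (1 + L / T) * (∫ t in (0 : ℝ)..T, sqNorm L u t) +
        L * (α ^ 2 + 4 * |β| + 1) * ∫ t in (0 : ℝ)..T, observation L u t := by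
  have := continuous_sqNorm (L := L) hu.continuous
  have := continuous_sqNorm (L := L) hu.continuous_pdx
  have := continuous_sqNorm (L := L) (continuous_invDx (L := L) hu.continuous_pdy)
  have := hu.continuous_observation
  have energy_balance := integral_add_sub_le_of_add_deriv_le
    (D := fun t => 3 * sqNorm L (pdx u) t + sqNorm L (invDx L (pdy u)) t)
    (S := fun t => sqNorm L u t + L * (α ^ 2 + 2 * |β|) * observation L u t) hT.le
    (fun t ht => hu.hasDerivAt_weightedEnergy hL hT ht 0 1) (by fun_prop) (by fun_prop)
    fun t _ => by linarith [hu.weighted_boundary_flux_le hL.le t]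
  have split : ∫ t in (0 : ℝ)..T, (sqNorm L u t + L * (α ^ 2 + 2 * |β|) * observation L u t) =
      (∫ t in (0 : ℝ)..T, sqNorm L u t) +
        L * (α ^ 2 + 2 * |β|) * ∫ t in (0 : ℝ)..T, observation L u t := by
    rw [integral_add_of_continuous (by fun_prop) (by fun_prop),
      intervalIntegral.integral_const_mul]
  have initial : weightedEnergy L u 0 1 0 ≤ L / T * (∫ t in (0 : ℝ)..T, sqNorm L u t) +
      L * ((1 + 2 * |β|) * ∫ t in (0 : ℝ)..T, observation L u t) := by
    refine (weightedEnergy_zero_one_le hL.le hu.continuous 0).trans ?_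
    rw [← mul_le_mul_iff_right₀ hT]
    calc
      _ ≤ L * ((∫ t in (0 : ℝ)..T, sqNorm L u t) +
          T * ((1 + 2 * |β|) * ∫ t in (0 : ℝ)..T, observation L u t)) := by
        linarith [mul_le_mul_of_nonneg_left (hu.mul_sqNorm_initial_le hL hT) hL.le]
      _ = _ := by field_simp
  have final := weightedEnergy_zero_one_nonneg hL.le u T
  linarith

end EnergyInequalities

end IsKPSolution

section CosineCoefficients

/-- The (unnormalised) cosine coefficient of `f(x, ·, t)` at a real frequency `k`. -/
def cosCoeff (L k : ℝ) (f : ℝ → ℝ → ℝ → ℝ) (x t : ℝ) : ℝ :=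
  ∫ y in (0 : ℝ)..L, f x y t * cos (k * y)

/-- The squared `L²(0, L)` norm in `x` of the cosine coefficient of `f` at frequency `k`. -/
def modeSqNorm (L k : ℝ) (f : ℝ → ℝ → ℝ → ℝ) (t : ℝ) : ℝ :=
  ∫ x in (0 : ℝ)..L, (cosCoeff L k f x t) ^ 2

/-- The energy of the cosine coefficient of `u` at frequency `k` for an affine multiplier
`a + b x`. -/
def modeEnergy (L k : ℝ) (u : ℝ → ℝ → ℝ → ℝ) (a b t : ℝ) : ℝ :=
  ∫ x in (0 : ℝ)..L, (a + b * x) * (cosCoeff L k u x t) ^ 2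

variable {L k : ℝ} {f g : ℝ → ℝ → ℝ → ℝ}

theorem continuous_cosCoeff (hf : Continuous fun p : ℝ × ℝ × ℝ => f p.1 p.2.1 p.2.2) :
    Continuous fun p : ℝ × ℝ => cosCoeff L k f p.1 p.2 := by
  unfold cosCoeff
  fun_prop

theorem continuous_modeSqNorm (hf : Continuous fun p : ℝ × ℝ × ℝ => f p.1 p.2.1 p.2.2) :
    Continuous (modeSqNorm L k f) := by
  have := continuous_cosCoeff (L := L) (k := k) hf
  unfold modeSqNorm
  fun_prop

theorem modeSqNorm_nonneg (hL : 0 ≤ L) (k : ℝ) (f : ℝ → ℝ → ℝ → ℝ) (t : ℝ) :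
    0 ≤ modeSqNorm L k f t :=
  intervalIntegral.integral_nonneg hL fun _ _ => sq_nonneg _

theorem hasDerivAt_cosCoeff_fst (hf : Continuous fun p : ℝ × ℝ × ℝ => f p.1 p.2.1 p.2.2)
    (hg : Continuous fun p : ℝ × ℝ × ℝ => g p.1 p.2.1 p.2.2)
    (hd : ∀ x y t, HasDerivAt (fun x => f x y t) (g x y t) x) (x t : ℝ) :
    HasDerivAt (fun x => cosCoeff L k f x t) (cosCoeff L k g x t) x :=
  hasDerivAt_integral_of_continuous (F := fun x y => f x y t * cos (k * y))
    (F' := fun x y => g x y t * cos (k * y)) (by fun_prop) (by fun_prop)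
    (fun x y => (hd x y t).mul_const _) 0 L x

theorem hasDerivAt_cosCoeff_snd (hf : Continuous fun p : ℝ × ℝ × ℝ => f p.1 p.2.1 p.2.2)
    (hg : Continuous fun p : ℝ × ℝ × ℝ => g p.1 p.2.1 p.2.2)
    (hd : ∀ x y t, HasDerivAt (fun t => f x y t) (g x y t) t) (x t : ℝ) :
    HasDerivAt (fun t => cosCoeff L k f x t) (cosCoeff L k g x t) t :=
  hasDerivAt_integral_of_continuous (F := fun t y => f x y t * cos (k * y))
    (F' := fun t y => g x y t * cos (k * y)) (by fun_prop) (by fun_prop)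
    (fun t y => (hd x y t).mul_const _) 0 L t

theorem cosCoeff_eq_zero (hL : 0 ≤ L) {x t : ℝ} (hf : ∀ y ∈ Icc 0 L, f x y t = 0) :
    cosCoeff L k f x t = 0 := by
  rw [cosCoeff, integral_congr_Icc hL fun y hy => by rw [hf y hy, zero_mul]]
  exact intervalIntegral.integral_zero

theorem sq_cosCoeff_le (hL : 0 ≤ L) (hf : Continuous fun p : ℝ × ℝ × ℝ => f p.1 p.2.1 p.2.2)
    (x t : ℝ) : (cosCoeff L k f x t) ^ 2 ≤ L * ∫ y in (0 : ℝ)..L, (f x y t) ^ 2 := by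
  refine (sq_integral_le (by fun_prop) hL).trans ?_
  rw [sub_zero]
  refine mul_le_mul_of_nonneg_left ?_ hL
  refine integral_le_integral_of_continuous (by fun_prop) (by fun_prop) hL fun y _ => ?_
  rw [mul_pow]
  exact mul_le_of_le_one_right (sq_nonneg _) (cos_sq_le_one _)

theorem modeEnergy_one_zero (u : ℝ → ℝ → ℝ → ℝ) (t : ℝ) :
    modeEnergy L k u 1 0 t = modeSqNorm L k u t := by
  simp [modeEnergy, modeSqNorm]

theorem modeEnergy_zero_one_nonneg (hL : 0 ≤ L) (k : ℝ) (u : ℝ → ℝ → ℝ → ℝ) (t : ℝ) :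
    0 ≤ modeEnergy L k u 0 1 t :=
  intervalIntegral.integral_nonneg hL fun x hx => mul_nonneg (by linarith [hx.1]) (sq_nonneg _)

theorem modeEnergy_zero_one_le (hL : 0 ≤ L)
    (hf : Continuous fun p : ℝ × ℝ × ℝ => f p.1 p.2.1 p.2.2) (t : ℝ) :
    modeEnergy L k f 0 1 t ≤ L * modeSqNorm L k f t := by
  have := continuous_cosCoeff (L := L) (k := k) hf
  rw [modeEnergy, modeSqNorm, ← intervalIntegral.integral_const_mul]
  exact integral_le_integral_of_continuous (by fun_prop) (by fun_prop) hL fun x hx =>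
    mul_le_mul_of_nonneg_right (by linarith [hx.2]) (sq_nonneg _)

theorem modeSqNorm_invDx_le (hL : 0 ≤ L)
    (hf : Continuous fun p : ℝ × ℝ × ℝ => f p.1 p.2.1 p.2.2) (t : ℝ) :
    modeSqNorm L k (invDx L f) t ≤ L ^ 2 * modeSqNorm L k f t := by
  have := continuous_cosCoeff (L := L) (k := k) hf
  have poincare := integral_sq_le_mul_integral_sq_deriv
    (hasDerivAt_cosCoeff_fst (L := L) (k := k) (continuous_invDx hf) hf
      (hasDerivAt_invDx_fst hf) · t)
    (by fun_prop) hL (cosCoeff_eq_zero hL fun y _ => invDx_right y t)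
  rwa [sub_zero] at poincare

end CosineCoefficients

/-- The boundary forcing of the cosine coefficient at frequency `k`, which collects the terms at
`y = L` in the integration by parts of `∂ₓ⁻¹ u_yy` against `cos (k y)`. -/
def modeForcing (L β k : ℝ) (u : ℝ → ℝ → ℝ → ℝ) (x t : ℝ) : ℝ :=
  β * cos (k * L) * u x L t + k * sin (k * L) * invDx L u x L t

namespace IsKPSolution

variable {L T α β : ℝ} {u : ℝ → ℝ → ℝ → ℝ} {x t : ℝ}

section ModeEquation

theorem cosCoeff_invDx_pdy_pdy (hu : IsKPSolution L T α β u) (hx : x ∈ Icc 0 L)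
    (ht : t ∈ Icc 0 T) (k : ℝ) :
    cosCoeff L k (invDx L (pdy (pdy u))) x t =
      modeForcing L β k u x t - k ^ 2 * cosCoeff L k (invDx L u) x t := by
  have := continuous_invDx (L := L) hu.continuous
  have := continuous_invDx (L := L) hu.continuous_pdy_pdy
  have primitive : ∀ y, HasDerivAt
      (fun y => invDx L (pdy u) x y t * cos (k * y) + k * (invDx L u x y t * sin (k * y)))
      (invDx L (pdy (pdy u)) x y t * cos (k * y) + k ^ 2 * (invDx L u x y t * cos (k * y))) y :=
    fun y => by
      have hk : HasDerivAt (fun y => k * y) k y := by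
        simpa using (hasDerivAt_id y).const_mul k
      exact (((hu.hasDerivAt_invDx_pdy_snd x y t).fun_mul hk.cos).fun_add
        (((hu.hasDerivAt_invDx_self_snd x y t).fun_mul hk.sin).const_mul k)).congr_deriv (by ring)
  have by_parts := integral_eq_sub_of_hasDerivAt_of_continuous primitive (by fun_prop) 0 L
  rw [integral_add_of_continuous (by fun_prop) (by fun_prop), intervalIntegral.integral_const_mul,
    hu.invDx_pdy_top hx ht, hu.invDx_pdy_bottom hx ht, mul_zero, sin_zero] at by_parts
  rw [cosCoeff, cosCoeff, modeForcing]
  linarith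

theorem cosCoeff_pdt (hu : IsKPSolution L T α β u) (hL : 0 < L) (hT : 0 < T) (hx : x ∈ Icc 0 L)
    (ht : t ∈ Icc 0 T) (k : ℝ) :
    cosCoeff L k (pdt u) x t =
      -(cosCoeff L k (pdx u) x t + cosCoeff L k (pdx (pdx (pdx u))) x t +
        modeForcing L β k u x t - k ^ 2 * cosCoeff L k (invDx L u) x t) := by
  have := hu.continuous_pdx
  have := hu.continuous_pdx_pdx_pdx
  have := continuous_invDx (L := L) hu.continuous_pdy_pdy
  rw [add_sub_assoc, ← hu.cosCoeff_invDx_pdy_pdy hx ht]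
  simp only [cosCoeff]
  rw [← integral_add_of_continuous (by fun_prop) (by fun_prop),
    ← integral_add_of_continuous (by fun_prop) (by fun_prop), ← intervalIntegral.integral_neg]
  exact integral_congr_Icc hL.le fun y hy => by
    rw [hu.pdt_eq hL hT hx hy ht]
    ring

theorem cosCoeff_pdx_right (hu : IsKPSolution L T α β u) (hL : 0 ≤ L) (ht : t ∈ Icc 0 T) (k : ℝ) :
    cosCoeff L k (pdx u) L t = α * cosCoeff L k (pdx u) 0 t := by
  rw [cosCoeff, cosCoeff, ← intervalIntegral.integral_const_mul]
  exact integral_congr_Icc hL fun y hy => by rw [hu.pdx_right hy ht, mul_assoc]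

theorem hasDerivAt_cosCoeff (hu : IsKPSolution L T α β u) (k x t : ℝ) :
    HasDerivAt (fun x => cosCoeff L k u x t) (cosCoeff L k (pdx u) x t) x :=
  hasDerivAt_cosCoeff_fst hu.continuous hu.continuous_pdx (hasDerivAt_pdx hu.contDiff) x t

theorem hasDerivAt_cosCoeff_invDx (hu : IsKPSolution L T α β u) (k x t : ℝ) :
    HasDerivAt (fun x => cosCoeff L k (invDx L u) x t) (cosCoeff L k u x t) x :=
  hasDerivAt_cosCoeff_fst (continuous_invDx hu.continuous) hu.continuous
    (hasDerivAt_invDx_fst hu.continuous) x t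

theorem cosCoeff_zero (hu : IsKPSolution L T α β u) (hL : 0 ≤ L) (ht : t ∈ Icc 0 T) (k : ℝ) :
    cosCoeff L k u 0 t = 0 :=
  cosCoeff_eq_zero hL fun _ hy => hu.apply_zero hy ht

theorem cosCoeff_right (hu : IsKPSolution L T α β u) (hL : 0 ≤ L) (ht : t ∈ Icc 0 T) (k : ℝ) :
    cosCoeff L k u L t = 0 :=
  cosCoeff_eq_zero hL fun _ hy => hu.apply_right hy ht

theorem continuous_modeForcing (hu : IsKPSolution L T α β u) (k : ℝ) :
    Continuous fun p : ℝ × ℝ => modeForcing L β k u p.1 p.2 := by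
  have := hu.continuous
  have := continuous_invDx (L := L) hu.continuous
  unfold modeForcing
  fun_prop

theorem integral_affine_mul_cosCoeff_mul_pdx_add_pdx3 (hu : IsKPSolution L T α β u) (hL : 0 ≤ L)
    (ht : t ∈ Icc 0 T) (a b k : ℝ) :
    ∫ x in (0 : ℝ)..L, 2 * (a + b * x) * cosCoeff L k u x t *
        (cosCoeff L k (pdx u) x t + cosCoeff L k (pdx (pdx (pdx u))) x t) =
      b * (3 * modeSqNorm L k (pdx u) t - modeSqNorm L k u t) +
        (a - (a + b * L) * α ^ 2) * (cosCoeff L k (pdx u) 0 t) ^ 2 := by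
  have := continuous_cosCoeff (L := L) (k := k) hu.continuous_pdx_pdx_pdx
  rw [integral_affine_mul_self_mul_deriv_add_deriv3 (hu.hasDerivAt_cosCoeff k · t)
    (hasDerivAt_cosCoeff_fst hu.continuous_pdx hu.contDiff_pdx_pdx.continuous
      (hasDerivAt_pdx hu.contDiff_pdx) · t)
    (hasDerivAt_cosCoeff_fst hu.contDiff_pdx_pdx.continuous hu.continuous_pdx_pdx_pdx
      (hasDerivAt_pdx hu.contDiff_pdx_pdx) · t) (by fun_prop) (hu.cosCoeff_zero hL ht k)
    (hu.cosCoeff_right hL ht k), hu.cosCoeff_pdx_right hL ht, modeSqNorm, modeSqNorm]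
  ring

theorem integral_affine_mul_cosCoeff_mul_invDx (hu : IsKPSolution L T α β u) (hL : 0 ≤ L)
    (a b k t : ℝ) :
    ∫ x in (0 : ℝ)..L, 2 * (a + b * x) * cosCoeff L k u x t * cosCoeff L k (invDx L u) x t =
      -(a * (cosCoeff L k (invDx L u) 0 t) ^ 2) - b * modeSqNorm L k (invDx L u) t := by
  have := continuous_cosCoeff (L := L) (k := k) hu.continuous
  exact integral_affine_mul_deriv_mul_self (hu.hasDerivAt_cosCoeff_invDx k · t) (by fun_prop)
    (cosCoeff_eq_zero hL fun y _ => invDx_right y t) a b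

theorem hasDerivAt_modeEnergy (hu : IsKPSolution L T α β u) (hL : 0 < L) (hT : 0 < T)
    (ht : t ∈ Icc 0 T) (a b k : ℝ) :
    HasDerivAt (modeEnergy L k u a b)
      (-(b * (3 * modeSqNorm L k (pdx u) t - modeSqNorm L k u t +
          k ^ 2 * modeSqNorm L k (invDx L u) t) +
        (a - (a + b * L) * α ^ 2) * (cosCoeff L k (pdx u) 0 t) ^ 2 +
        a * (k * cosCoeff L k (invDx L u) 0 t) ^ 2 +
        ∫ x in (0 : ℝ)..L, 2 * (a + b * x) * cosCoeff L k u x t * modeForcing L β k u x t)) t := by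
  have := continuous_cosCoeff (L := L) (k := k) hu.continuous
  have := continuous_cosCoeff (L := L) (k := k) hu.continuous_pdx
  have := continuous_cosCoeff (L := L) (k := k) hu.continuous_pdx_pdx_pdx
  have := continuous_cosCoeff (L := L) (k := k) hu.continuous_pdt
  have := continuous_cosCoeff (L := L) (k := k) (continuous_invDx (L := L) hu.continuous)
  have := hu.continuous_modeForcing k
  refine (hasDerivAt_integral_of_continuous
    (F := fun t x => (a + b * x) * (cosCoeff L k u x t) ^ 2)
    (F' := fun t x => 2 * (a + b * x) * cosCoeff L k u x t * cosCoeff L k (pdt u) x t)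
    (by fun_prop) (by fun_prop) (fun t x => (((hasDerivAt_cosCoeff_snd hu.continuous
      hu.continuous_pdt (hasDerivAt_pdt hu.contDiff) x t).fun_pow 2).const_mul _).congr_deriv
        (by push_cast; ring)) 0 L t).congr_deriv ?_
  calc
    _ = ∫ x in (0 : ℝ)..L, (k ^ 2 * (2 * (a + b * x) * cosCoeff L k u x t *
          cosCoeff L k (invDx L u) x t) - 2 * (a + b * x) * cosCoeff L k u x t *
          (cosCoeff L k (pdx u) x t + cosCoeff L k (pdx (pdx (pdx u))) x t) -
        2 * (a + b * x) * cosCoeff L k u x t * modeForcing L β k u x t) :=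
      integral_congr_Icc hL.le fun x hx => by
        rw [hu.cosCoeff_pdt hL hT hx ht]
        ring
    _ = _ := by
      rw [integral_sub_of_continuous (by fun_prop) (by fun_prop),
        integral_sub_of_continuous (by fun_prop) (by fun_prop),
        intervalIntegral.integral_const_mul, hu.integral_affine_mul_cosCoeff_mul_invDx hL.le,
        hu.integral_affine_mul_cosCoeff_mul_pdx_add_pdx3 hL.le ht]
      ring

end ModeEquation

end IsKPSolution

/-- The constant in the bound of the boundary terms of the mode of frequency `k` by the
observation. -/
def modeBoundaryConst (L β k : ℝ) : ℝ :=
  L + 2 * L ^ 3 * k ^ 2 + 2 * (β ^ 2 + k ^ 2 * L ^ 2)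

theorem modeBoundaryConst_nonneg {L : ℝ} (hL : 0 ≤ L) (β k : ℝ) : 0 ≤ modeBoundaryConst L β k := by
  unfold modeBoundaryConst
  positivity

namespace IsKPSolution

variable {L T α β : ℝ} {u : ℝ → ℝ → ℝ → ℝ} {t : ℝ}

section ModeBoundaryTerms

theorem sq_cosCoeff_invDx_zero_le (hu : IsKPSolution L T α β u) (hL : 0 ≤ L) (k t : ℝ) :
    (cosCoeff L k (invDx L u) 0 t) ^ 2 ≤
      2 * L ^ 3 * (sqNormTop L u t + sqNormLeft L (invDx L (pdy u)) t) := by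
  have := continuous_invDx (L := L) hu.continuous
  have := continuous_invDx (L := L) hu.continuous_pdy
  have := hu.continuous
  have corner : (invDx L u 0 L t) ^ 2 ≤ L * sqNormTop L u t := by
    have h := sq_le_mul_integral_sq_deriv (hasDerivAt_invDx_fst hu.continuous · L t) (by fun_prop)
      ⟨le_rfl, hL⟩ (invDx_right L t)
    rwa [sub_zero] at h
  have trace (y : ℝ) (hy : y ∈ Icc 0 L) : (invDx L u 0 y t) ^ 2 ≤
      2 * L * (sqNormTop L u t + sqNormLeft L (invDx L (pdy u)) t) := by
    have increment := sq_sub_le_mul_integral_sq_deriv (hu.hasDerivAt_invDx_self_snd 0 · t)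
      (by fun_prop) hy (right_mem_Icc.2 hL)
    have hV := sqNormLeft_nonneg hL (invDx L (pdy u)) t
    have : |y - L| * sqNormLeft L (invDx L (pdy u)) t ≤ L * sqNormLeft L (invDx L (pdy u)) t :=
      mul_le_mul_of_nonneg_right (abs_le.2 ⟨by linarith [hy.1], by linarith [hy.2]⟩) hV
    rw [← sqNormLeft] at increment
    nlinarith [sq_nonneg (invDx L u 0 y t - 2 * invDx L u 0 L t)]
  calc
    _ ≤ L * ∫ y in (0 : ℝ)..L, (invDx L u 0 y t) ^ 2 :=
      sq_cosCoeff_le hL (continuous_invDx hu.continuous) 0 t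
    _ ≤ L * ∫ _y in (0 : ℝ)..L, 2 * L * (sqNormTop L u t + sqNormLeft L (invDx L (pdy u)) t) :=
      mul_le_mul_of_nonneg_left (integral_le_integral_of_continuous (by fun_prop) (by fun_prop) hL
        trace) hL
    _ = _ := by
      rw [intervalIntegral.integral_const, smul_eq_mul]
      ring

theorem integral_sq_modeForcing_le (hu : IsKPSolution L T α β u) (hL : 0 ≤ L) (k t : ℝ) :
    ∫ x in (0 : ℝ)..L, (modeForcing L β k u x t) ^ 2 ≤
      2 * (β ^ 2 + k ^ 2 * L ^ 2) * sqNormTop L u t := by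
  have := hu.continuous
  have := continuous_invDx (L := L) hu.continuous
  have := hu.continuous_modeForcing k
  have poincare := integral_sq_le_mul_integral_sq_deriv
    (hasDerivAt_invDx_fst hu.continuous · L t) (by fun_prop) hL (invDx_right L t)
  rw [sub_zero] at poincare
  have pointwise (x : ℝ) : (modeForcing L β k u x t) ^ 2 ≤
      2 * β ^ 2 * (u x L t) ^ 2 + 2 * k ^ 2 * (invDx L u x L t) ^ 2 :=
    calc
      _ ≤ 2 * ((β * cos (k * L) * u x L t) ^ 2 + (k * sin (k * L) * invDx L u x L t) ^ 2) :=
        add_sq_le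
      _ = 2 * (cos (k * L) ^ 2 * (β * u x L t) ^ 2 +
          sin (k * L) ^ 2 * (k * invDx L u x L t) ^ 2) := by ring
      _ ≤ 2 * ((β * u x L t) ^ 2 + (k * invDx L u x L t) ^ 2) := by
        gcongr
        · exact mul_le_of_le_one_left (sq_nonneg _) (cos_sq_le_one _)
        · exact mul_le_of_le_one_left (sq_nonneg _) (sin_sq_le_one _)
      _ = _ := by ring
  calc
    _ ≤ ∫ x in (0 : ℝ)..L, (2 * β ^ 2 * (u x L t) ^ 2 + 2 * k ^ 2 * (invDx L u x L t) ^ 2) :=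
      integral_le_integral_of_continuous (by fun_prop) (by fun_prop) hL fun x _ => pointwise x
    _ = 2 * β ^ 2 * sqNormTop L u t + 2 * k ^ 2 * ∫ x in (0 : ℝ)..L, (invDx L u x L t) ^ 2 := by
      rw [integral_add_of_continuous (by fun_prop) (by fun_prop),
        intervalIntegral.integral_const_mul, intervalIntegral.integral_const_mul, sqNormTop]
    _ ≤ 2 * β ^ 2 * sqNormTop L u t + 2 * k ^ 2 * (L ^ 2 * sqNormTop L u t) := by
      gcongr
      exact poincare
    _ = _ := by ring

theorem mode_boundary_terms_le (hu : IsKPSolution L T α β u) (hL : 0 ≤ L) (k t : ℝ) :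
    (cosCoeff L k (pdx u) 0 t) ^ 2 + (k * cosCoeff L k (invDx L u) 0 t) ^ 2 +
        (∫ x in (0 : ℝ)..L, (modeForcing L β k u x t) ^ 2) ≤
      modeBoundaryConst L β k * observation L u t := by
  have hP := sqNormLeft_nonneg hL (pdx u) t
  have hB := sqNormTop_nonneg hL u t
  have hV := sqNormLeft_nonneg hL (invDx L (pdy u)) t
  calc
    _ ≤ L * sqNormLeft L (pdx u) t +
        k ^ 2 * (2 * L ^ 3 * (sqNormTop L u t + sqNormLeft L (invDx L (pdy u)) t)) +
        2 * (β ^ 2 + k ^ 2 * L ^ 2) * sqNormTop L u t := by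
      rw [mul_pow]
      gcongr
      · exact sq_cosCoeff_le hL hu.continuous_pdx 0 t
      · exact hu.sq_cosCoeff_invDx_zero_le hL k t
      · exact hu.integral_sq_modeForcing_le hL k t
    _ ≤ L * observation L u t + 2 * L ^ 3 * k ^ 2 * observation L u t +
        2 * (β ^ 2 + k ^ 2 * L ^ 2) * observation L u t := by
      rw [← mul_assoc (k ^ 2), mul_comm (k ^ 2)]
      unfold observation
      gcongr <;> linarith
    _ = _ := by
      rw [modeBoundaryConst]
      ring

end ModeBoundaryTerms

section ModeInequalities

theorem abs_integral_affine_mul_cosCoeff_mul_modeForcing_le (hu : IsKPSolution L T α β u)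
    (hL : 0 ≤ L) {a b m : ℝ} (hm : ∀ x ∈ Icc 0 L, |a + b * x| ≤ m) (k t : ℝ) :
    |∫ x in (0 : ℝ)..L, 2 * (a + b * x) * cosCoeff L k u x t * modeForcing L β k u x t| ≤
      modeSqNorm L k u t + m ^ 2 * ∫ x in (0 : ℝ)..L, (modeForcing L β k u x t) ^ 2 := by
  have := continuous_cosCoeff (L := L) (k := k) hu.continuous
  have := hu.continuous_modeForcing k
  exact abs_integral_two_mul_mul_mul_le (by fun_prop) (by fun_prop) (by fun_prop) hL hm

theorem mul_modeSqNorm_initial_le (hu : IsKPSolution L T α β u) (hL : 0 < L) (hT : 0 < T) (k : ℝ) :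
    T * modeSqNorm L k u 0 ≤ (1 + T) * (∫ t in (0 : ℝ)..T, modeSqNorm L k u t) +
      T * (modeBoundaryConst L β k * ∫ t in (0 : ℝ)..T, observation L u t) := by
  have := hu.continuous_observation
  have := continuous_modeSqNorm (L := L) (k := k) hu.continuous
  have initial := mul_initial_le_integral_add
    (R := fun t => modeSqNorm L k u t + modeBoundaryConst L β k * observation L u t) hT.le
    (fun t ht => hu.hasDerivAt_modeEnergy hL hT ht 1 0 k) (by fun_prop)
    (fun t _ => add_nonneg (modeSqNorm_nonneg hL.le k u t) (mul_nonneg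
      (modeBoundaryConst_nonneg hL.le β k) (observation_nonneg hL.le u t))) fun t _ => ?_
  · simp only [modeEnergy_one_zero] at initial
    rw [integral_add_of_continuous (by fun_prop) (by fun_prop),
      intervalIntegral.integral_const_mul] at initial
    linarith
  · have forcing := (abs_le.1 (hu.abs_integral_affine_mul_cosCoeff_mul_modeForcing_le hL.le
      (a := 1) (b := 0) (m := 1) (fun x _ => by simp) k t)).2
    have boundary := hu.mode_boundary_terms_le hL.le k t
    have := mul_nonneg (sq_nonneg α) (sq_nonneg (cosCoeff L k (pdx u) 0 t))
    linarith

theorem mode_dissipation_add_deriv_le (hu : IsKPSolution L T α β u) (hL : 0 ≤ L) (k t : ℝ) :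
    modeSqNorm L k u t + L * α ^ 2 * (cosCoeff L k (pdx u) 0 t) ^ 2 -
        (∫ x in (0 : ℝ)..L, 2 * (0 + 1 * x) * cosCoeff L k u x t * modeForcing L β k u x t) ≤
      2 * modeSqNorm L k u t + L * (α ^ 2 + L) * modeBoundaryConst L β k * observation L u t := by
  have forcing := (abs_le.1 (hu.abs_integral_affine_mul_cosCoeff_mul_modeForcing_le hL
    (a := 0) (b := 1) (m := L) (fun x hx => by simp [abs_of_nonneg hx.1, hx.2]) k t)).1
  have forcing_nonneg : 0 ≤ ∫ x in (0 : ℝ)..L, (modeForcing L β k u x t) ^ 2 :=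
    intervalIntegral.integral_nonneg hL fun _ _ => sq_nonneg _
  have boundary := mul_le_mul_of_nonneg_left (hu.mode_boundary_terms_le hL k t)
    (by positivity : 0 ≤ L * (α ^ 2 + L))
  have : 0 ≤ L * α ^ 2 * ((k * cosCoeff L k (invDx L u) 0 t) ^ 2 +
      ∫ x in (0 : ℝ)..L, (modeForcing L β k u x t) ^ 2) := by positivity
  have : 0 ≤ L ^ 2 * ((cosCoeff L k (pdx u) 0 t) ^ 2 +
      (k * cosCoeff L k (invDx L u) 0 t) ^ 2) := by positivity
  linarith

theorem integral_mode_dissipation_le (hu : IsKPSolution L T α β u) (hL : 0 < L) (hT : 0 < T)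
    (k : ℝ) :
    ∫ t in (0 : ℝ)..T, (3 * modeSqNorm L k (pdx u) t + k ^ 2 * modeSqNorm L k (invDx L u) t) ≤
      (2 + L / T + L) * (∫ t in (0 : ℝ)..T, modeSqNorm L k u t) +
      L * (1 + α ^ 2 + L) * modeBoundaryConst L β k * ∫ t in (0 : ℝ)..T, observation L u t := by
  have := hu.continuous_observation
  have := continuous_modeSqNorm (L := L) (k := k) hu.continuous
  have := continuous_modeSqNorm (L := L) (k := k) hu.continuous_pdx
  have := continuous_modeSqNorm (L := L) (k := k) (continuous_invDx (L := L) hu.continuous)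
  have energy_balance := integral_add_sub_le_of_add_deriv_le
    (D := fun t => 3 * modeSqNorm L k (pdx u) t + k ^ 2 * modeSqNorm L k (invDx L u) t)
    (S := fun t => 2 * modeSqNorm L k u t +
      L * (α ^ 2 + L) * modeBoundaryConst L β k * observation L u t) hT.le
    (fun t ht => hu.hasDerivAt_modeEnergy hL hT ht 0 1 k) (by fun_prop) (by fun_prop)
    fun t _ => by linarith [hu.mode_dissipation_add_deriv_le hL.le k t]
  have split : ∫ t in (0 : ℝ)..T, (2 * modeSqNorm L k u t +
      L * (α ^ 2 + L) * modeBoundaryConst L β k * observation L u t) =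
      2 * (∫ t in (0 : ℝ)..T, modeSqNorm L k u t) + L * (α ^ 2 + L) * modeBoundaryConst L β k *
        ∫ t in (0 : ℝ)..T, observation L u t := by
    rw [integral_add_of_continuous (by fun_prop) (by fun_prop),
      intervalIntegral.integral_const_mul, intervalIntegral.integral_const_mul]
  have initial : modeEnergy L k u 0 1 0 ≤
      (L / T + L) * (∫ t in (0 : ℝ)..T, modeSqNorm L k u t) +
        L * (modeBoundaryConst L β k * ∫ t in (0 : ℝ)..T, observation L u t) := by
    refine (modeEnergy_zero_one_le hL.le hu.continuous 0).trans ?_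
    rw [← mul_le_mul_iff_right₀ hT]
    calc
      _ ≤ L * ((1 + T) * (∫ t in (0 : ℝ)..T, modeSqNorm L k u t) +
          T * (modeBoundaryConst L β k * ∫ t in (0 : ℝ)..T, observation L u t)) := by
        linarith [mul_le_mul_of_nonneg_left (hu.mul_modeSqNorm_initial_le hL hT k) hL.le]
      _ = _ := by field_simp
  have final := modeEnergy_zero_one_nonneg hL.le k u T
  linarith

theorem integral_modeSqNorm_le (hu : IsKPSolution L T α β u) (hL : 0 < L) (hT : 0 < T)
    {k : ℝ} (hk : 3 + L / T + L ≤ 2 * k) :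
    ∫ t in (0 : ℝ)..T, modeSqNorm L k u t ≤
      L * (1 + α ^ 2 + L) * modeBoundaryConst L β k * ∫ t in (0 : ℝ)..T, observation L u t := by
  have := continuous_modeSqNorm (L := L) (k := k) hu.continuous
  have := continuous_modeSqNorm (L := L) (k := k) hu.continuous_pdx
  have := continuous_modeSqNorm (L := L) (k := k) (continuous_invDx (L := L) hu.continuous)
  have := continuous_cosCoeff (L := L) (k := k) hu.continuous_pdx
  have interpolation : ∫ t in (0 : ℝ)..T, 2 * k * modeSqNorm L k u t ≤
      ∫ t in (0 : ℝ)..T, (3 * modeSqNorm L k (pdx u) t +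
        k ^ 2 * modeSqNorm L k (invDx L u) t) :=
    integral_le_integral_of_continuous (by fun_prop) (by fun_prop) hT.le fun t ht => by
      have h := two_mul_integral_sq_deriv_le (hu.hasDerivAt_cosCoeff_invDx k · t)
        (hu.hasDerivAt_cosCoeff k · t) (by fun_prop) hL.le (hu.cosCoeff_zero hL.le ht k)
        (hu.cosCoeff_right hL.le ht k) k
      rw [← modeSqNorm, ← modeSqNorm, ← modeSqNorm] at h
      linarith [modeSqNorm_nonneg hL.le k (pdx u) t]
  have nonneg : 0 ≤ ∫ t in (0 : ℝ)..T, modeSqNorm L k u t :=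
    intervalIntegral.integral_nonneg hT.le fun t _ => modeSqNorm_nonneg hL.le k u t
  rw [intervalIntegral.integral_const_mul] at interpolation
  linarith [hu.integral_mode_dissipation_le hL hT k, mul_le_mul_of_nonneg_right hk nonneg]

end ModeInequalities

end IsKPSolution

section Absorption

variable {L T α β : ℝ} {u : ℝ → ℝ → ℝ → ℝ} {t : ℝ}

theorem exists_finset_sqNorm_le_add_sum_modeSqNorm (hL : 0 < L) {ε : ℝ} (hε : 0 < ε) (k₀ : ℝ) :
    ∃ K : Finset ℝ, ↑K ⊆ Ioi k₀ ∧ ∃ C ≥ 0, ∀ f g : ℝ → ℝ → ℝ → ℝ,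
      (Continuous fun p : ℝ × ℝ × ℝ => f p.1 p.2.1 p.2.2) →
      (Continuous fun p : ℝ × ℝ × ℝ => g p.1 p.2.1 p.2.2) →
      (∀ x y t, HasDerivAt (fun y => f x y t) (g x y t) y) →
      ∀ t, sqNorm L f t ≤ ε * sqNorm L g t + C * ∑ k ∈ K, modeSqNorm L k f t := by
  obtain ⟨K, hK, C, hC, slice⟩ := exists_finset_integral_sq_le_add_sum_sq_cos hL hε k₀
  refine ⟨K, hK, C, hC, fun f g hf hg hd t => ?_⟩
  have (k : ℝ) : Continuous fun x => cosCoeff L k f x t := by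
    have := continuous_cosCoeff (L := L) (k := k) hf
    fun_prop
  calc
    _ ≤ ∫ x in (0 : ℝ)..L, (ε * (∫ y in (0 : ℝ)..L, (g x y t) ^ 2) +
        C * ∑ k ∈ K, (cosCoeff L k f x t) ^ 2) :=
      integral_le_integral_of_continuous (by fun_prop) (by fun_prop) hL.le fun x _ =>
        slice _ _ (fun y => hd x y t) (by fun_prop)
    _ = _ := by
      rw [integral_add_of_continuous (by fun_prop) (by fun_prop),
        intervalIntegral.integral_const_mul, intervalIntegral.integral_const_mul,
        intervalIntegral.integral_finsetSum fun k _ =>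
          Continuous.intervalIntegrable (by fun_prop) 0 L]
      rfl

theorem IsKPSolution.two_mul_sqNorm_le (hu : IsKPSolution L T α β u) (hL : 0 ≤ L)
    (ht : t ∈ Icc 0 T) (m : ℝ) :
    2 * m * sqNorm L u t ≤ sqNorm L (pdx u) t + m ^ 2 * sqNorm L (invDx L u) t := by
  have := hu.continuous
  have := hu.continuous_pdx
  have := continuous_invDx (L := L) hu.continuous
  rw [sqNorm_eq_integral_swap hu.continuous, sqNorm_eq_integral_swap hu.continuous_pdx,
    sqNorm_eq_integral_swap this, ← intervalIntegral.integral_const_mul,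
    ← intervalIntegral.integral_const_mul,
    ← integral_add_of_continuous (by fun_prop) (by fun_prop)]
  exact integral_le_integral_of_continuous (by fun_prop) (by fun_prop) hL fun y hy =>
    two_mul_integral_sq_deriv_le (hasDerivAt_invDx_fst hu.continuous · y t)
      (hasDerivAt_pdx hu.contDiff · y t) (by fun_prop) hL (hu.apply_zero hy ht)
      (hu.apply_right hy ht) m

theorem exists_finset_sqNorm_le_dissipation_add_sum_modeSqNorm (hL : 0 < L) {δ : ℝ} (hδ : 0 < δ)
    (k₀ : ℝ) : ∃ K : Finset ℝ, ↑K ⊆ Ioi k₀ ∧ ∃ C ≥ 0, ∀ T α β u, IsKPSolution L T α β u →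
      ∀ t ∈ Icc 0 T, sqNorm L u t ≤
        δ * (3 * sqNorm L (pdx u) t + sqNorm L (invDx L (pdy u)) t) +
          C * ∑ k ∈ K, modeSqNorm L k u t := by
  obtain ⟨K, hK, C, hC, compact⟩ := exists_finset_sqNorm_le_add_sum_modeSqNorm hL
    (by positivity : 0 < 4 * δ ^ 2) k₀
  refine ⟨K, hK, C * L ^ 2 / (4 * δ), by positivity, fun T α β u hu t ht => ?_⟩
  have interpolation := hu.two_mul_sqNorm_le hL.le ht (1 / (2 * δ))
  have compactness := compact _ _ (continuous_invDx hu.continuous)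
    (continuous_invDx hu.continuous_pdy) hu.hasDerivAt_invDx_self_snd t
  have modes : ∑ k ∈ K, modeSqNorm L k (invDx L u) t ≤ L ^ 2 * ∑ k ∈ K, modeSqNorm L k u t := by
    rw [Finset.mul_sum]
    exact Finset.sum_le_sum fun k _ => modeSqNorm_invDx_le hL.le hu.continuous t
  calc
    _ = δ * (2 * (1 / (2 * δ)) * sqNorm L u t) := by field_simp
    _ ≤ δ * (sqNorm L (pdx u) t + (1 / (2 * δ)) ^ 2 *
        (4 * δ ^ 2 * sqNorm L (invDx L (pdy u)) t +
          C * (L ^ 2 * ∑ k ∈ K, modeSqNorm L k u t))) := by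
      gcongr
      exact interpolation.trans (by gcongr; exact compactness.trans (by gcongr))
    _ = δ * (sqNorm L (pdx u) t + sqNorm L (invDx L (pdy u)) t) +
        C * L ^ 2 / (4 * δ) * ∑ k ∈ K, modeSqNorm L k u t := by
      field_simp
      ring
    _ ≤ _ := by
      gcongr
      linarith [sqNorm_nonneg hL.le (pdx u) t]

theorem exists_integral_sqNorm_le (hL : 0 < L) (hT : 0 < T) (α β : ℝ) :
    ∃ C ≥ 0, ∀ u, IsKPSolution L T α β u →
      ∫ t in (0 : ℝ)..T, sqNorm L u t ≤ C * ∫ t in (0 : ℝ)..T, observation L u t := by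
  obtain ⟨K, hK, C, hC, absorb⟩ := exists_finset_sqNorm_le_dissipation_add_sum_modeSqNorm hL
    (by positivity : 0 < 1 / (2 * (1 + L / T))) ((3 + L / T + L) / 2)
  have mode_const_nonneg (k : ℝ) : 0 ≤ L * (1 + α ^ 2 + L) * modeBoundaryConst L β k :=
    mul_nonneg (by positivity) (modeBoundaryConst_nonneg hL.le β k)
  have := Finset.sum_nonneg fun k (_ : k ∈ K) => mode_const_nonneg k
  refine ⟨2 * (1 / (2 * (1 + L / T)) * (L * (α ^ 2 + 4 * |β| + 1)) +
    C * ∑ k ∈ K, L * (1 + α ^ 2 + L) * modeBoundaryConst L β k), by positivity, fun u hu => ?_⟩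
  have := continuous_sqNorm (L := L) hu.continuous
  have := continuous_sqNorm (L := L) hu.continuous_pdx
  have := continuous_sqNorm (L := L) (continuous_invDx (L := L) hu.continuous_pdy)
  have (k : ℝ) := continuous_modeSqNorm (L := L) (k := k) hu.continuous
  have modes : ∑ k ∈ K, ∫ t in (0 : ℝ)..T, modeSqNorm L k u t ≤
      (∑ k ∈ K, L * (1 + α ^ 2 + L) * modeBoundaryConst L β k) *
        ∫ t in (0 : ℝ)..T, observation L u t := by
    rw [Finset.sum_mul]
    exact Finset.sum_le_sum fun k hk =>
      hu.integral_modeSqNorm_le hL hT (by linarith [mem_Ioi.1 (hK hk)])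
  have absorbed : ∫ t in (0 : ℝ)..T, sqNorm L u t ≤ 1 / (2 * (1 + L / T)) *
      (∫ t in (0 : ℝ)..T, (3 * sqNorm L (pdx u) t + sqNorm L (invDx L (pdy u)) t)) +
        C * ∑ k ∈ K, ∫ t in (0 : ℝ)..T, modeSqNorm L k u t := by
    rw [← intervalIntegral.integral_finsetSum fun k _ => (this k).intervalIntegrable 0 T,
      ← intervalIntegral.integral_const_mul, ← intervalIntegral.integral_const_mul,
      ← integral_add_of_continuous (by fun_prop) (by fun_prop)]
    exact integral_le_integral_of_continuous (by fun_prop) (by fun_prop) hT.le fun t ht =>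
      absorb T α β u hu t ht
  have dissipation := mul_le_mul_of_nonneg_left (hu.integral_dissipation_le hL hT)
    (by positivity : 0 ≤ 1 / (2 * (1 + L / T)))
  have half : 1 / (2 * (1 + L / T)) * ((1 + L / T) * ∫ t in (0 : ℝ)..T, sqNorm L u t) =
      (∫ t in (0 : ℝ)..T, sqNorm L u t) / 2 := by
    field_simp
  linarith [mul_le_mul_of_nonneg_left modes hC]

end Absorption

theorem IsKPSolution.integral_observation {L T α β : ℝ} {u : ℝ → ℝ → ℝ → ℝ}
    (hu : IsKPSolution L T α β u) :
    ∫ t in (0 : ℝ)..T, observation L u t =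
      (∫ t in (0 : ℝ)..T, ∫ y in (0 : ℝ)..L, (pdx u 0 y t) ^ 2) +
        (∫ t in (0 : ℝ)..T, ∫ x in (0 : ℝ)..L, (u x L t) ^ 2) +
        ∫ t in (0 : ℝ)..T, ∫ y in (0 : ℝ)..L, (pxInv L (fun s y' => pdy u s y' t) 0 y) ^ 2 := by
  have := continuous_sqNormLeft (L := L) hu.continuous_pdx
  have := continuous_sqNormTop (L := L) hu.continuous
  have := continuous_sqNormLeft (L := L) (continuous_invDx (L := L) hu.continuous_pdy)
  simp only [observation]
  rw [integral_add_of_continuous (by fun_prop) (by fun_prop),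
    integral_add_of_continuous (by fun_prop) (by fun_prop)]
  rfl

theorem kp_observability_general (L T α β : ℝ) (hL : 0 < L) (hT : 0 < T) :
    ∃ C > (0 : ℝ), ∀ u : ℝ → ℝ → ℝ → ℝ, IsKPSolution L T α β u →
      (∫ x in (0 : ℝ)..L, ∫ y in (0 : ℝ)..L, (u x y 0) ^ 2) ≤
        C * ((∫ t in (0 : ℝ)..T, ∫ y in (0 : ℝ)..L, (pdx u 0 y t) ^ 2) +
          (∫ t in (0 : ℝ)..T, ∫ x in (0 : ℝ)..L, (u x L t) ^ 2) +
          ∫ t in (0 : ℝ)..T, ∫ y in (0 : ℝ)..L,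
            (pxInv L (fun s y' => pdy u s y' t) 0 y) ^ 2) := by
  obtain ⟨C, hC, energy_le⟩ := exists_integral_sqNorm_le hL hT α β
  refine ⟨C / T + (1 + 2 * |β|), by positivity, fun u hu => ?_⟩
  rw [← hu.integral_observation, ← sqNorm, ← mul_le_mul_iff_right₀ hT]
  calc
    _ ≤ (C + T * (1 + 2 * |β|)) * ∫ t in (0 : ℝ)..T, observation L u t := by
      linarith [hu.mul_sqNorm_initial_le hL hT, energy_le u hu]
    _ = _ := by field_simp

/-- Observability inequality: there exists `C > 0` such that every classical solution
of the closed-loop linear KP-II system satisfies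
`∫_Ω u(·,·,0)² ≤ C [∫₀^T ∫₀^L u_x(0,y,t)² dy dt + ∫₀^T ∫₀^L u(x,L,t)² dx dt
  + ∫₀^T ∫₀^L ((∂ₓ⁻¹ u_y)(0,y,t))² dy dt]`. -/
theorem kp_observability (L T α β : ℝ) (hL : 0 < L) (hT : 0 < T)
    (hα0 : 0 < |α|) (hα1 : |α| < 1) (hβ : 0 < β) :
    ∃ C > (0:ℝ), ∀ u : ℝ → ℝ → ℝ → ℝ, IsKPSolution L T α β u →
      (∫ x in (0:ℝ)..L, ∫ y in (0:ℝ)..L, (u x y 0)^2)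
        ≤ C * ((∫ t in (0:ℝ)..T, ∫ y in (0:ℝ)..L, (pdx u 0 y t)^2)
              + (∫ t in (0:ℝ)..T, ∫ x in (0:ℝ)..L, (u x L t)^2)
              + (∫ t in (0:ℝ)..T, ∫ y in (0:ℝ)..L,
                  (pxInv L (fun s y' => pdy u s y' t) 0 y)^2)) :=
  kp_observability_general L T α β hL hT

end
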